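/- arXiv:2105.09960 — 2 statements merged into one kernel-verified Lean document; each statement's English description precedes it below -/
import Mathlib

section
/- Let ℋ = ℋ_j ⊗ ℋ_i be a tensor product of two finite-dimensional complex Hilbert spaces, and let X, Y be operators on ℋ such that the partial trace of Y over the factor ℋ_i vanishes and X = X_j ⊗ I_i for some operator X_j on ℋ_j. Then for every real q ≥ 2, ‖X + Y‖_q² ≤ ‖X‖_q² + (q−1)·‖Y‖_q². -/
open scoped Kronecker Matrix

/-- The Schatten `q`-norm `‖A‖_q = (Tr((AᴴA)^{q/2}))^{1/q}`, expressed through the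
eigenvalues of `AᴴA` (the squared singular values of `A`). -/
noncomputable def schattenNorm {n : Type*} [Fintype n] [DecidableEq n] (q : ℝ)
    (A : Matrix n n ℂ) : ℝ :=
  (∑ i, ((Matrix.isHermitian_conjTranspose_mul_self A).eigenvalues i) ^ (q / 2)) ^ (1 / q)

/-- The partial trace of an operator on `ℋ_j ⊗ ℋ_i` over the factor `ℋ_i`. -/
noncomputable def ptraceRight {J I : Type*} [Fintype I]
    (Y : Matrix (J × I) (J × I) ℂ) : Matrix J J ℂ :=
  Matrix.of fun a b => ∑ i : I, Y (a, i) (b, i)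

set_option linter.unusedSectionVars false
namespace USS

open Finset

lemma mid_aux (p a b : ℝ) (hp0 : 0 ≤ p) (hp1 : p ≤ 1) (hb : 0 ≤ b) (hab : b ≤ a) :
    a ^ (p+1) - b ^ (p+1) ≤ (p+1) * (a - b) * ((a+b)/2)^p := by
  set m := (a+b)/2 with hm
  have hm0 : 0 ≤ m := by rw [hm]; linarith
  have key : MonotoneOn (fun d : ℝ => 2 * (p+1) * d * m^p - ((m+d)^(p+1) - (m-d)^(p+1))) (Set.Icc 0 m) := by
    apply monotoneOn_of_hasDerivWithinAt_nonneg (convex_Icc 0 m)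
      (f' := fun d => 2 * (p+1) * m^p - ((p+1) * (m+d)^p + (p+1) * (m-d)^p))
    · apply Continuous.continuousOn
      have h1 : Continuous fun d : ℝ => (m+d)^(p+1) :=
        (continuous_const.add continuous_id).rpow_const (fun x => Or.inr (by linarith))
      have h2 : Continuous fun d : ℝ => (m-d)^(p+1) :=
        (continuous_const.sub continuous_id).rpow_const (fun x => Or.inr (by linarith))
      exact (by fun_prop : Continuous fun d : ℝ => 2 * (p+1) * d * m^p).sub (h1.sub h2)
    · intro d hd
      apply HasDerivAt.hasDerivWithinAt
      have h1 : HasDerivAt (fun d : ℝ => (m+d)^(p+1)) (1 * (p+1) * (m+d)^(p+1-1)) d :=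
        ((hasDerivAt_id d).const_add m).rpow_const (Or.inr (by linarith))
      have h2 : HasDerivAt (fun d : ℝ => (m-d)^(p+1)) ((-1) * (p+1) * (m-d)^(p+1-1)) d :=
        ((hasDerivAt_id d).const_sub m).rpow_const (Or.inr (by linarith))
      have h3 : HasDerivAt (fun d : ℝ => 2 * (p+1) * d * m^p) (2 * (p+1) * 1 * m^p) d :=
        ((hasDerivAt_id d).const_mul _).mul_const _
      rw [add_sub_cancel_right] at h1 h2
      refine (h3.sub (h1.sub h2)).congr_deriv ?_
      ring
    · intro d hd
      rw [interior_Icc] at hd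
      have hx1 : m + d ∈ Set.Ici (0:ℝ) := by simp; linarith [hd.1]
      have hx2 : m - d ∈ Set.Ici (0:ℝ) := by simp; linarith [hd.2]
      have := (Real.concaveOn_rpow hp0 hp1).2 hx1 hx2 (by norm_num : (0:ℝ) ≤ 1/2)
        (by norm_num : (0:ℝ) ≤ 1/2) (by norm_num)
      simp only [smul_eq_mul] at this
      rw [show 1/2 * (m+d) + 1/2*(m-d) = m by ring] at this
      nlinarith
  have := key (a := 0) (b := (a-b)/2) ⟨le_refl _, hm0⟩ ⟨by linarith, by rw [hm]; linarith⟩ (by linarith)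
  simp only [mul_zero, add_zero, sub_zero, sub_self, zero_mul] at this
  rw [show m + (a-b)/2 = a by rw [hm]; ring, show m - (a-b)/2 = b by rw [hm]; ring] at this
  linarith

lemma end_aux (p a b : ℝ) (hp1 : 1 ≤ p) (hb : 0 ≤ b) (hab : b ≤ a) :
    a ^ (p+1) - b ^ (p+1) ≤ (p+1) * (a - b) * ((a^p+b^p)/2) := by
  have key : MonotoneOn (fun x : ℝ => (p+1) * (x - b) * ((x^p+b^p)/2) - (x^(p+1) - b^(p+1))) (Set.Ici b) := by
    have hd : ∀ x : ℝ, HasDerivAt (fun x : ℝ => (p+1) * (x - b) * ((x^p+b^p)/2) - (x^(p+1) - b^(p+1)))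
        (((p+1) * 1) * ((x^p+b^p)/2) + (p+1) * (x-b) * ((1 * p * x^(p-1))/2) - 1 * (p+1) * x^(p+1-1)) x := by
      intro x
      have h1 : HasDerivAt (fun x : ℝ => x^(p+1)) (1 * (p+1) * x^(p+1-1)) x :=
        (hasDerivAt_id x).rpow_const (Or.inr (by linarith))
      have h2 : HasDerivAt (fun x : ℝ => x^p) (1 * p * x^(p-1)) x :=
        (hasDerivAt_id x).rpow_const (Or.inr hp1)
      exact ((((hasDerivAt_id x).sub_const b).const_mul (p+1)).mul ((h2.add_const _).div_const 2)).sub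
        (h1.sub_const _)
    apply monotoneOn_of_hasDerivWithinAt_nonneg (convex_Ici b)
      (fun x _ => (hd x).continuousAt.continuousWithinAt) (fun x _ => (hd x).hasDerivWithinAt)
    intro x hx
    rw [interior_Ici] at hx
    have hx : b < x := hx
    have hx0 : 0 < x := by linarith
    have t : x^p = x^(p-1) * x := by
      rw [← Real.rpow_add_one hx0.ne']; ring_nf
    have hbern : x^p + p * x^(p-1) * (b - x) ≤ b^p := by
      have := one_add_mul_self_le_rpow_one_add (s := b/x - 1) (by have : 0 ≤ b/x := by positivity
                                                                  linarith) hp1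
      rw [show 1 + (b/x-1) = b/x by ring, Real.div_rpow hb hx0.le, le_div_iff₀ (by positivity)] at this
      calc _ = (1 + p * (b/x-1)) * x^p := by rw [t]; field_simp
        _ ≤ _ := this
    simp only [add_sub_cancel_right]
    nlinarith
  have := key (a := b) (b := a) (by simp) hab hab
  simp only [sub_self, mul_zero, zero_mul] at this
  linarith

/-- the mean -/
noncomputable def M (p a b : ℝ) : ℝ := if p ≤ 1 then ((a+b)/2)^p else (a^p+b^p)/2

lemma M_comm (p a b : ℝ) : M p a b = M p b a := by
  unfold M; rw [add_comm a b, add_comm (a^p)]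

lemma M_nonneg (p a b : ℝ) (ha : 0 ≤ a) (hb : 0 ≤ b) : 0 ≤ M p a b := by
  unfold M; split_ifs <;> positivity

lemma M_self (p a : ℝ) : M p a a = a^p := by
  unfold M; split_ifs <;> simp

lemma same_aux (p a b : ℝ) (hp : 0 ≤ p) (hb : 0 ≤ b) (hab : b ≤ a) :
    a ^ (p+1) - b ^ (p+1) ≤ (p+1) * (a - b) * M p a b := by
  unfold M; split_ifs with h
  · exact mid_aux p a b hp h hb hab
  · exact end_aux p a b (by linarith) hb hab

lemma opp_aux (p a b : ℝ) (hp : 0 ≤ p) (hb : 0 ≤ b) (hab : b ≤ a) :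
    a ^ (p+1) + b ^ (p+1) ≤ (p+1) * (a + b) * M p a b := by
  have ha : 0 ≤ a := hb.trans hab
  have t : ∀ x : ℝ, 0 ≤ x → x^(p+1) = x^p * x := by
    intro x hx
    rw [Real.rpow_add_one' hx (by linarith)]
  rcases hab.eq_or_lt with rfl | h
  · rw [M_self, t _ hb]
    have : 0 ≤ b^p * b := by positivity
    nlinarith
  · have h1 := same_aux p a b hp hb hab
    have hM := M_nonneg p a b ha hb
    have h2 : (a^(p+1) + b^(p+1)) * (a - b) ≤ (a^(p+1) - b^(p+1)) * (a+b) := by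
      rw [t _ ha, t _ hb]
      have : b^p ≤ a^p := Real.rpow_le_rpow hb hab hp
      nlinarith [mul_nonneg ha hb]
    have h3 : 0 < a - b := by linarith
    refine le_of_mul_le_mul_right ?_ h3
    nlinarith

noncomputable def h (p x : ℝ) : ℝ := x * |x| ^ p

lemma abs_mul_rpow (p x : ℝ) (hp : 0 ≤ p) : |x| * |x|^p = |x|^(p+1) := by
  rw [Real.rpow_add_one' (abs_nonneg x) (by linarith), mul_comm]

lemma abs_h (p x : ℝ) (hp : 0 ≤ p) : |h p x| = |x|^(p+1) := by
  unfold h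
  rw [abs_mul, abs_of_nonneg (by positivity : 0 ≤ |x|^p), abs_mul_rpow p x hp]

lemma h_neg (p x : ℝ) : h p (-x) = - h p x := by simp [h]

lemma h_nonneg_eq (p x : ℝ) (hp : 0 ≤ p) (hx : 0 ≤ x) : h p x = x^(p+1) := by
  have := abs_mul_rpow p x hp
  rw [abs_of_nonneg hx] at this
  simp [h, abs_of_nonneg hx, this]

lemma scalar_main (p a b : ℝ) (hp : 0 ≤ p) :
    (a - b) * (h p a - h p b) ≤ (p+1) * ((a - b)^2 * M p |a| |b|) := by
  -- reduce
  have case1 : ∀ a b : ℝ, 0 ≤ b → b ≤ a → (a - b) * (h p a - h p b) ≤ (p+1) * ((a - b)^2 * M p |a| |b|) := by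
    intro a b hb hab
    rw [h_nonneg_eq p a hp (hb.trans hab), h_nonneg_eq p b hp hb, abs_of_nonneg hb, abs_of_nonneg (hb.trans hab)]
    have := same_aux p a b hp hb hab
    nlinarith
  have case2 : ∀ a b : ℝ, 0 ≤ b → 0 ≤ a → (a + b) * (h p a + h p b) ≤ (p+1) * ((a + b)^2 * M p |a| |b|) := by
    intro a b hb ha
    rw [h_nonneg_eq p a hp ha, h_nonneg_eq p b hp hb, abs_of_nonneg hb, abs_of_nonneg ha]
    rcases le_total b a with hab | hab
    · have := opp_aux p a b hp hb hab
      nlinarith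
    · have := opp_aux p b a hp ha hab
      rw [M_comm] at this
      nlinarith
  have case1' : ∀ a b : ℝ, 0 ≤ b → 0 ≤ a → (a - b) * (h p a - h p b) ≤ (p+1) * ((a - b)^2 * M p |a| |b|) := by
    intro a b hb ha
    rcases le_total b a with hab | hab
    · exact case1 a b hb hab
    · have := case1 b a ha hab
      rw [M_comm] at this
      linarith
  rcases le_total 0 a with ha | ha <;> rcases le_total 0 b with hb | hb
  · exact case1' a b hb ha
  · have := case2 a (-b) (by linarith) ha
    rw [h_neg, abs_neg] at this
    simpa [sub_eq_add_neg] using this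
  · have := case2 (-a) b hb (by linarith)
    rw [h_neg, abs_neg] at this
    linarith
  · have := case1' (-a) (-b) (by linarith) (by linarith)
    rw [h_neg, h_neg, abs_neg, abs_neg] at this
    linarith

/-- the `ℓ^q` norm -/
noncomputable def N {n : Type*} [Fintype n] (q : ℝ) (x : n → ℝ) : ℝ := (∑ i, |x i| ^ q) ^ (1/q)

section
variable {n : Type*} [Fintype n]

lemma N_nonneg (q : ℝ) (x : n → ℝ) : 0 ≤ N q x := by unfold N; positivity

lemma N_rpow (q r : ℝ) (x : n → ℝ) : N q x ^ r = (∑ i, |x i| ^ q) ^ (r/q) := by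
  unfold N
  rw [← Real.rpow_mul (by positivity)]; congr 1; ring

lemma N_rpow_self (q : ℝ) (hq : 0 < q) (x : n → ℝ) : N q x ^ q = ∑ i, |x i| ^ q := by
  rw [N_rpow, div_self hq.ne', Real.rpow_one]

lemma holderW (r s : ℝ) (hr : 0 < r) (hs : 0 < s) (w : n → n → ℝ) (hw : ∀ i j, 0 ≤ w i j)
    (h1 : ∀ i, ∑ j, w i j = 1) (h2 : ∀ j, ∑ i, w i j = 1) (x y : n → ℝ) :
    ∑ i, ∑ j, w i j * (|x i| ^ r * |y j| ^ s) ≤ N (r+s) x ^ r * N (r+s) y ^ s := by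
  set q := r + s with hq
  have hq0 : 0 < q := by positivity
  have hc : Real.HolderConjugate (q/r) (q/s) := by
    rw [Real.holderConjugate_iff]
    refine ⟨by rw [lt_div_iff₀ hr]; linarith, by field_simp; linarith⟩
  have := Real.inner_le_Lp_mul_Lq_of_nonneg (univ : Finset (n × n)) (f := fun z => w z.1 z.2 ^ (r/q) * |x z.1|^r)
    (g := fun z => w z.1 z.2 ^ (s/q) * |y z.2|^s) hc
    (fun z _ => by have := hw z.1 z.2; positivity) (fun z _ => by have := hw z.1 z.2; positivity)
  rw [Fintype.sum_prod_type, Fintype.sum_prod_type, Fintype.sum_prod_type] at this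
  rw [N_rpow, N_rpow]
  have e1 : ∀ (r : ℝ), 0 < r → ∀ (w x : ℝ), 0 ≤ w → (w ^ (r/q) * |x|^r) ^ (q/r) = w * |x|^q := by
    intro r hr w x hw
    rw [Real.mul_rpow (by positivity) (by positivity), ← Real.rpow_mul hw, ← Real.rpow_mul (abs_nonneg x)]
    rw [show r/q*(q/r) = 1 by field_simp, show r * (q/r) = q by field_simp, Real.rpow_one]
  convert this using 1
  · apply sum_congr rfl; intro i _; apply sum_congr rfl; intro j _
    have : w i j = w i j ^ (r/q) * w i j ^ (s/q) := by
      rw [← Real.rpow_add' (hw i j) (by rw [← add_div]; exact (div_pos hq0 hq0).ne'), ← add_div, ← hq,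
        div_self hq0.ne', Real.rpow_one]
    conv_lhs => rw [this]
    ring
  · congr 2
    · apply sum_congr rfl; intro i _
      simp_rw [e1 r hr _ _ (hw _ _), ← sum_mul, h1, one_mul]
    · field_simp
    · rw [sum_comm]
      apply sum_congr rfl; intro i _
      simp_rw [e1 s hs _ _ (hw _ _), ← sum_mul, h2, one_mul]
    · field_simp

end

section
variable {n : Type*} [Fintype n] [DecidableEq n]

noncomputable def F (U : Matrix n n ℂ) (x : n → ℝ) : Matrix n n ℂ :=
  U * Matrix.diagonal (fun i => (x i : ℂ)) * Uᴴ

noncomputable def ov (U V : Matrix n n ℂ) (i j : n) : ℝ := Complex.normSq ((Uᴴ * V) i j)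

lemma ov_nonneg (U V : Matrix n n ℂ) (i j : n) : 0 ≤ ov U V i j := Complex.normSq_nonneg _

lemma F_herm (U : Matrix n n ℂ) (x : n → ℝ) : (F U x)ᴴ = F U x := by
  unfold F
  rw [Matrix.conjTranspose_mul, Matrix.conjTranspose_mul, Matrix.conjTranspose_conjTranspose,
    Matrix.diagonal_conjTranspose, Matrix.mul_assoc]
  congr 3
  ext i; simp

lemma F_mul (U : Matrix n n ℂ) (hU : Uᴴ * U = 1) (x y : n → ℝ) :
    F U x * F U y = F U (fun i => x i * y i) := by
  unfold F
  calc _ = U * Matrix.diagonal (fun i => (x i : ℂ)) * (Uᴴ * U) * Matrix.diagonal (fun i => (y i : ℂ)) * Uᴴ := by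
        simp only [Matrix.mul_assoc]
    _ = _ := by
        rw [hU, Matrix.mul_one, Matrix.mul_assoc U, Matrix.diagonal_mul_diagonal]
        simp

lemma row_diag (P : Matrix n n ℂ) (x : n → ℝ) :
    (Matrix.trace (Matrix.diagonal (fun i => (x i : ℂ)) * (P * Pᴴ))).re
      = ∑ i, ∑ j, Complex.normSq (P i j) * x i := by
  rw [Matrix.trace, Complex.re_sum]
  apply sum_congr rfl; intro i _
  rw [Matrix.diag_apply, Matrix.diagonal_mul, Complex.re_ofReal_mul, Matrix.mul_apply, Complex.re_sum, mul_sum]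
  apply sum_congr rfl; intro j _
  rw [Matrix.conjTranspose_apply, Complex.star_def, Complex.mul_conj, Complex.ofReal_re, mul_comm]

lemma row_sum (U V Z : Matrix n n ℂ) (hV : V * Vᴴ = 1) (x : n → ℝ) :
    ∑ i, ∑ j, Complex.normSq ((Uᴴ * Z * V) i j) * x i = (Matrix.trace (F U x * (Z * Zᴴ))).re := by
  rw [← row_diag]
  congr 1
  unfold F
  rw [Matrix.mul_assoc U, Matrix.mul_assoc U, Matrix.trace_mul_comm U]
  congr 1
  simp only [Matrix.conjTranspose_mul, Matrix.conjTranspose_conjTranspose, Matrix.mul_assoc]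
  rw [← Matrix.mul_assoc V, hV, Matrix.one_mul]

lemma trace_F (U V : Matrix n n ℂ) (x y : n → ℝ) :
    (Matrix.trace (F U x * F V y)).re = ∑ i, ∑ j, ov U V i j * (x i * y j) := by
  have : Matrix.trace (F U x * F V y) = Matrix.trace (Matrix.diagonal (fun i => (x i : ℂ)) *
      ((Uᴴ * V) * Matrix.diagonal (fun i => (y i : ℂ)) * (Uᴴ * V)ᴴ)) := by
    unfold F
    rw [Matrix.mul_assoc U, Matrix.mul_assoc U, Matrix.trace_mul_comm U]
    congr 1
    simp only [Matrix.conjTranspose_mul, Matrix.conjTranspose_conjTranspose, Matrix.mul_assoc]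
  rw [this, Matrix.trace, Complex.re_sum]
  apply sum_congr rfl; intro i _
  rw [Matrix.diag_apply, Matrix.diagonal_mul, Complex.re_ofReal_mul, Matrix.mul_apply, Complex.re_sum, mul_sum]
  apply sum_congr rfl; intro j _
  rw [Matrix.conjTranspose_apply, Complex.star_def, Matrix.mul_diagonal, mul_right_comm, Complex.mul_conj,
    ← Complex.ofReal_mul, Complex.ofReal_re, ov]
  ring

lemma ov_row (U V : Matrix n n ℂ) (hU : Uᴴ * U = 1) (hV : Vᴴ * V = 1) (i : n) : ∑ j, ov U V i j = 1 := by
  have h : (Uᴴ * V) * (Uᴴ * V)ᴴ = 1 := by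
    rw [Matrix.conjTranspose_mul, Matrix.conjTranspose_conjTranspose, Matrix.mul_assoc, ← Matrix.mul_assoc V,
      mul_eq_one_comm.mp hV, Matrix.one_mul, hU]
  have h2 := congrArg Complex.re (congrFun (congrFun h i) i)
  rw [Matrix.mul_apply, Complex.re_sum] at h2
  simp only [Matrix.one_apply_eq, Complex.one_re] at h2
  rw [← h2]
  apply sum_congr rfl; intro j _
  rw [Matrix.conjTranspose_apply, Complex.star_def, Complex.mul_conj, Complex.ofReal_re, ov]

lemma ov_comm (U V : Matrix n n ℂ) (i j : n) : ov U V i j = ov V U j i := by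
  unfold ov
  have : (Uᴴ * V) i j = star ((Vᴴ * U) j i) := by
    rw [← Matrix.conjTranspose_apply, Matrix.conjTranspose_mul, Matrix.conjTranspose_conjTranspose]
  rw [this, Complex.star_def, Complex.normSq_conj]

lemma ov_col (U V : Matrix n n ℂ) (hU : Uᴴ * U = 1) (hV : Vᴴ * V = 1) (j : n) : ∑ i, ov U V i j = 1 := by
  simp_rw [ov_comm U V]; exact ov_row V U hV hU j

/-- `∑ |Z_ij|² x_i` where `Z = F W z` -/
lemma row_sum_F (U V W : Matrix n n ℂ) (hV : Vᴴ * V = 1) (hW : Wᴴ * W = 1) (z x : n → ℝ) :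
    ∑ i, ∑ j, Complex.normSq ((Uᴴ * F W z * V) i j) * x i = ∑ i, ∑ k, ov U W i k * (x i * (z k)^2) := by
  rw [row_sum _ _ _ (mul_eq_one_comm.mp hV), F_herm, F_mul W hW, trace_F]
  simp only [sq]

lemma entry_comm (U V W : Matrix n n ℂ) (z : n → ℝ) (i j : n) :
    Complex.normSq ((Uᴴ * F W z * V) i j) = Complex.normSq ((Vᴴ * F W z * U) j i) := by
  have : (Uᴴ * F W z * V) i j = star ((Vᴴ * F W z * U) j i) := by
    rw [← Matrix.conjTranspose_apply]
    simp only [Matrix.conjTranspose_mul, Matrix.conjTranspose_conjTranspose, F_herm, Matrix.mul_assoc]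
  rw [this, Complex.star_def, Complex.normSq_conj]

lemma col_sum_F (U V W : Matrix n n ℂ) (hU : Uᴴ * U = 1) (hW : Wᴴ * W = 1) (z x : n → ℝ) :
    ∑ i, ∑ j, Complex.normSq ((Uᴴ * F W z * V) i j) * x j = ∑ i, ∑ k, ov V W i k * (x i * (z k)^2) := by
  rw [sum_comm]
  simp_rw [entry_comm U V]
  exact row_sum_F V U W hU hW z x

lemma tot_sum_F (U V W : Matrix n n ℂ) (hU : Uᴴ * U = 1) (hV : Vᴴ * V = 1) (hW : Wᴴ * W = 1) (z : n → ℝ) :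
    ∑ i, ∑ j, Complex.normSq ((Uᴴ * F W z * V) i j) = ∑ k, (z k)^2 := by
  have := row_sum_F U V W hV hW z (fun _ => 1)
  simp only [mul_one, one_mul] at this
  rw [this, sum_comm]
  simp_rw [← sum_mul, ov_col U W hU hW, one_mul]

lemma inner_sum_F (U V W : Matrix n n ℂ) (hU : Uᴴ * U = 1) (hV : Vᴴ * V = 1) (hW : Wᴴ * W = 1) (y z : n → ℝ) :
    ∑ i, ∑ j, ((Uᴴ * F W y * V) i j * star ((Uᴴ * F W z * V) i j)).re = ∑ k, y k * z k := by
  have e : ∑ i, ∑ j, ((Uᴴ * F W y * V) i j * star ((Uᴴ * F W z * V) i j)).re =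
     (Matrix.trace ((Uᴴ * F W y * V) * (Uᴴ * F W z * V)ᴴ)).re := by
    rw [Matrix.trace, Complex.re_sum]
    apply sum_congr rfl; intro i _
    rw [Matrix.diag_apply, Matrix.mul_apply, Complex.re_sum]
    rfl
  rw [e]
  have : Matrix.trace ((Uᴴ * F W y * V) * (Uᴴ * F W z * V)ᴴ) = ∑ k, ((y k * z k : ℝ) : ℂ) := by
    simp only [Matrix.conjTranspose_mul, Matrix.conjTranspose_conjTranspose, Matrix.mul_assoc, F_herm]
    rw [← Matrix.mul_assoc V, mul_eq_one_comm.mp hV, Matrix.one_mul, Matrix.trace_mul_comm]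
    simp only [Matrix.mul_assoc]
    rw [mul_eq_one_comm.mp hU, Matrix.mul_one, F_mul W hW, F, Matrix.trace_mul_comm, ← Matrix.mul_assoc, hW,
      Matrix.one_mul, Matrix.trace_diagonal]
  rw [this, ← Complex.ofReal_sum, Complex.ofReal_re]

end

section
variable {n : Type*} [Fintype n] [DecidableEq n]

noncomputable def mu (U V W : Matrix n n ℂ) (x y : n → ℝ) (k : n) : ℝ :=
  ((∑ i, ov U W i k * x i) + (∑ i, ov V W i k * y i)) / 2

lemma mu_nonneg (U V W : Matrix n n ℂ) (x y : n → ℝ) (hx : ∀ i, 0 ≤ x i) (hy : ∀ i, 0 ≤ y i) (k : n) :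
    0 ≤ mu U V W x y k := by
  unfold mu
  have h1 : 0 ≤ ∑ i, ov U W i k * x i := sum_nonneg fun i _ => mul_nonneg (ov_nonneg _ _ _ _) (hx i)
  have h2 : 0 ≤ ∑ i, ov V W i k * y i := sum_nonneg fun i _ => mul_nonneg (ov_nonneg _ _ _ _) (hy i)
  linarith

lemma resolvent (U V W : Matrix n n ℂ) (hU : Uᴴ * U = 1) (hV : Vᴴ * V = 1) (hW : Wᴴ * W = 1)
    (b x y : n → ℝ) (hx : ∀ i, 0 ≤ x i) (hy : ∀ i, 0 ≤ y i) (t : ℝ) (ht : 0 < t) :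
    ∑ k, (b k)^2 * (t + mu U V W x y k)⁻¹ ≤
      ∑ i, ∑ j, Complex.normSq ((Uᴴ * F W b * V) i j) * (t + (x i + y j)/2)⁻¹ := by
  set μ := mu U V W x y with hμ
  have hμ0 : ∀ k, 0 ≤ μ k := mu_nonneg U V W x y hx hy
  set z : n → ℝ := fun k => b k * (t + μ k)⁻¹ with hz
  have key : ∀ i j, 2 * ((Uᴴ * F W b * V) i j * star ((Uᴴ * F W z * V) i j)).re
      - (t * Complex.normSq ((Uᴴ * F W z * V) i j) + (Complex.normSq ((Uᴴ * F W z * V) i j) * x i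
        + Complex.normSq ((Uᴴ * F W z * V) i j) * y j) / 2) ≤
      Complex.normSq ((Uᴴ * F W b * V) i j) * (t + (x i + y j)/2)⁻¹ := by
    intro i j
    generalize (Uᴴ * F W b * V) i j = B
    generalize (Uᴴ * F W z * V) i j = Z
    have hc : 0 < t + (x i + y j)/2 := by have := hx i; have := hy j; positivity
    have e : t * Complex.normSq Z + (Complex.normSq Z * x i + Complex.normSq Z * y j)/2
      = (t + (x i + y j)/2) * Complex.normSq Z := by ring
    rw [e]
    generalize t + (x i + y j)/2 = c at hc
    rw [← div_eq_mul_inv, le_div_iff₀ hc]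
    simp only [Complex.normSq_apply, Complex.star_def, Complex.mul_re, Complex.conj_re, Complex.conj_im]
    nlinarith [sq_nonneg (B.re - c * Z.re), sq_nonneg (B.im - c * Z.im)]
  refine le_trans ?_ (sum_le_sum fun i _ => sum_le_sum fun j _ => key i j)
  simp only [sum_sub_distrib, sum_add_distrib, ← mul_sum, ← sum_div]
  rw [inner_sum_F U V W hU hV hW, tot_sum_F U V W hU hV hW, row_sum_F U V W hV hW, col_sum_F U V W hU hW]
  rw [sum_comm (f := fun i k => ov U W i k * (x i * z k ^ 2)), sum_comm (f := fun i k => ov V W i k * (y i * z k ^ 2))]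
  have e2 : ∀ k, (∑ i, ov U W i k * (x i * z k ^ 2) + ∑ i, ov V W i k * (y i * z k ^ 2)) / 2 = μ k * z k ^ 2 := by
    intro k
    rw [hμ, mu]
    simp only [← mul_assoc, ← sum_mul]
    ring
  rw [← sum_add_distrib, sum_div]
  simp_rw [e2]
  rw [mul_sum, mul_sum, ← sum_add_distrib, ← sum_sub_distrib]
  apply le_of_eq
  apply sum_congr rfl; intro k _
  have : t + μ k ≠ 0 := by have := hμ0 k; positivity
  simp only [hz]
  field_simp
  ring

lemma mid_sum (U V W : Matrix n n ℂ) (hU : Uᴴ * U = 1) (hV : Vᴴ * V = 1) (hW : Wᴴ * W = 1)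
    (b x y : n → ℝ) (hx : ∀ i, 0 ≤ x i) (hy : ∀ i, 0 ≤ y i) (p : ℝ) (hp : p ∈ Set.Ioo (0:ℝ) 1) :
    ∑ i, ∑ j, Complex.normSq ((Uᴴ * F W b * V) i j) * ((x i + y j)/2)^p ≤
      ∑ k, (b k)^2 * (mu U V W x y k)^p := by
  have hμ0 : ∀ k, 0 ≤ mu U V W x y k := mu_nonneg U V W x y hx hy
  have hm0 : ∀ i j, 0 ≤ (x i + y j)/2 := fun i j => by have := hx i; have := hy j; positivity
  have hC := Real.integral_rpowIntegrand₀₁_one_pos hp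
  simp_rw [fun i j => Real.rpow_eq_const_mul_integral hp (hm0 i j), fun k => Real.rpow_eq_const_mul_integral hp (hμ0 k)]
  simp_rw [mul_left_comm _ (_⁻¹), ← mul_sum]
  apply mul_le_mul_of_nonneg_left _ (inv_nonneg.mpr hC.le)
  simp_rw [← MeasureTheory.integral_const_mul]
  have i1 : ∀ i j, MeasureTheory.Integrable (fun t => Complex.normSq ((Uᴴ * F W b * V) i j) *
      Real.rpowIntegrand₀₁ p t ((x i + y j)/2)) (MeasureTheory.volume.restrict (Set.Ioi 0)) :=
    fun i j => (Real.integrableOn_rpowIntegrand₀₁_Ioi hp (hm0 i j)).const_mul _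
  have i2 : ∀ k, MeasureTheory.Integrable (fun t => (b k)^2 *
      Real.rpowIntegrand₀₁ p t (mu U V W x y k)) (MeasureTheory.volume.restrict (Set.Ioi 0)) :=
    fun k => (Real.integrableOn_rpowIntegrand₀₁_Ioi hp (hμ0 k)).const_mul _
  rw [← MeasureTheory.integral_finsetSum _ (fun k _ => i2 k)]
  simp_rw [fun i => (MeasureTheory.integral_finsetSum univ (fun j _ => i1 i j)).symm]
  rw [← MeasureTheory.integral_finsetSum _ (fun i _ => MeasureTheory.integrable_finsetSum _ (fun j _ => i1 i j))]
  apply MeasureTheory.setIntegral_mono_on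
  · exact MeasureTheory.integrable_finsetSum _ (fun i _ => MeasureTheory.integrable_finsetSum _ (fun j _ => i1 i j))
  · exact MeasureTheory.integrable_finsetSum _ (fun k _ => i2 k)
  · exact measurableSet_Ioi
  intro t ht
  have ht : 0 < t := ht
  have hr := resolvent U V W hU hV hW b x y hx hy t ht
  have ht' := tot_sum_F U V W hU hV hW b
  unfold Real.rpowIntegrand₀₁
  simp_rw [mul_left_comm _ (t^p), ← mul_sum, mul_sub, sum_sub_distrib, ← sum_mul]
  rw [ht']
  apply mul_le_mul_of_nonneg_left _ (by positivity)
  linarith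

lemma N_mu (U V W : Matrix n n ℂ) (hU : Uᴴ * U = 1) (hV : Vᴴ * V = 1) (hW : Wᴴ * W = 1)
    (α γ : n → ℝ) (q R : ℝ) (hq : 1 ≤ q) (h1 : N q α ≤ R) (h2 : N q γ ≤ R) :
    N q (mu U V W (fun i => |α i|) (fun i => |γ i|)) ≤ R := by
  have hq0 : 0 < q := by linarith
  have hμ0 := mu_nonneg U V W (fun i => |α i|) (fun i => |γ i|) (fun i => abs_nonneg _) (fun i => abs_nonneg _)
  rw [← Real.rpow_le_rpow_iff (N_nonneg _ _) ((N_nonneg _ _).trans h1) hq0, N_rpow_self q hq0]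
  have r1 := Real.rpow_le_rpow (N_nonneg _ _) h1 hq0.le
  have r2 := Real.rpow_le_rpow (N_nonneg _ _) h2 hq0.le
  rw [N_rpow_self q hq0] at r1 r2
  have jen : ∀ (U : Matrix n n ℂ) (hU : Uᴴ * U = 1) (α : n → ℝ) k,
      (∑ i, ov U W i k * |α i|) ^ q ≤ ∑ i, ov U W i k * |α i| ^ q := fun U hU α k =>
    Real.rpow_arith_mean_le_arith_mean_rpow _ _ _ (fun i _ => ov_nonneg _ _ _ _) (ov_col U W hU hW k)
      (fun i _ => abs_nonneg _) hq
  have s1 : ∀ (U : Matrix n n ℂ) (hU : Uᴴ * U = 1) (α : n → ℝ),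
      ∑ k, ∑ i, ov U W i k * |α i| ^ q = ∑ i, |α i|^q := by
    intro U hU α
    rw [sum_comm]
    simp_rw [← sum_mul, ov_row U W hU hW, one_mul]
  calc ∑ k, |mu U V W (fun i => |α i|) (fun i => |γ i|) k| ^ q
      ≤ ∑ k, ((∑ i, ov U W i k * |α i| ^ q) + (∑ i, ov V W i k * |γ i| ^ q)) / 2 := by
        apply sum_le_sum; intro k _
        rw [abs_of_nonneg (hμ0 k)]
        have hA : 0 ≤ ∑ i, ov U W i k * |α i| := sum_nonneg fun i _ => mul_nonneg (ov_nonneg _ _ _ _) (abs_nonneg _)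
        have hB : 0 ≤ ∑ i, ov V W i k * |γ i| := sum_nonneg fun i _ => mul_nonneg (ov_nonneg _ _ _ _) (abs_nonneg _)
        have := (convexOn_rpow hq).2 (Set.mem_Ici.mpr hA) (Set.mem_Ici.mpr hB) (by norm_num : (0:ℝ) ≤ 1/2)
          (by norm_num : (0:ℝ) ≤ 1/2) (by norm_num)
        simp only [smul_eq_mul] at this
        have e : mu U V W (fun i => |α i|) (fun i => |γ i|) k =
          1/2 * ∑ i, ov U W i k * |α i| + 1/2 * ∑ i, ov V W i k * |γ i| := by unfold mu; ring
        rw [e]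
        have := jen U hU α k
        have := jen V hV γ k
        linarith
    _ = (∑ i, |α i|^q + ∑ i, |γ i|^q)/2 := by
        rw [← sum_div, sum_add_distrib, s1 U hU, s1 V hV]
    _ ≤ R ^ q := by linarith

lemma est_M (U V W : Matrix n n ℂ) (hU : Uᴴ * U = 1) (hV : Vᴴ * V = 1) (hW : Wᴴ * W = 1)
    (b α γ : n → ℝ) (p R : ℝ) (hp : 0 ≤ p) (h1 : N (p+2) α ≤ R) (h2 : N (p+2) γ ≤ R) :
    ∑ i, ∑ j, Complex.normSq ((Uᴴ * F W b * V) i j) * M p |α i| |γ j| ≤ N (p+2) b ^ 2 * R ^ p := by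
  have hb0 := N_nonneg (p+2) b
  rcases hp.eq_or_lt with rfl | hp
  · simp only [M, zero_le_one, if_true, Real.rpow_zero, mul_one]
    rw [tot_sum_F U V W hU hV hW, ← Real.rpow_two, N_rpow]
    simp
  rcases lt_or_ge p 1 with hp1 | hp1
  · simp only [M, hp1.le, if_true]
    refine (mid_sum U V W hU hV hW b (fun i => |α i|) (fun i => |γ i|) (fun i => abs_nonneg _)
      (fun i => abs_nonneg _) p ⟨hp, hp1⟩).trans ?_
    have hμ0 := mu_nonneg U V W (fun i => |α i|) (fun i => |γ i|) (fun i => abs_nonneg _) (fun i => abs_nonneg _)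
    have hN := N_mu U V W hU hV hW α γ (p+2) R (by linarith) h1 h2
    generalize mu U V W (fun i => |α i|) (fun i => |γ i|) = μ at hμ0 hN
    have := holderW p 2 hp (by norm_num) (fun i j : n => if i = j then (1:ℝ) else 0)
      (fun i j => by positivity) (by simp) (by simp) μ b
    simp only [ite_mul, one_mul, zero_mul, sum_ite_eq, mem_univ, if_true, abs_of_nonneg (hμ0 _),
      Real.rpow_two, sq_abs] at this
    calc _ = ∑ i, μ i ^ p * b i ^ 2 := sum_congr rfl fun i _ => mul_comm _ _
      _ ≤ _ := this
      _ ≤ R ^ p * N (p+2) b ^ 2 := by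
        have := N_nonneg (p+2) μ
        gcongr
      _ = _ := mul_comm _ _
  · have hM : ∀ i j, M p |α i| |γ j| = (|α i|^p + |γ j|^p)/2 := by
      intro i j
      unfold M; split_ifs with h
      · have : p = 1 := le_antisymm h hp1
        subst this; simp
      · rfl
    simp_rw [hM]
    have H : ∀ (U : Matrix n n ℂ) (hU : Uᴴ * U = 1) (α : n → ℝ), N (p+2) α ≤ R →
      ∑ i, ∑ k, ov U W i k * (|α i|^p * (b k)^2) ≤ N (p+2) b ^ 2 * R ^ p := by
      intro U hU α hα
      have := holderW p 2 hp (by norm_num) (ov U W) (ov_nonneg U W) (ov_row U W hU hW) (ov_col U W hU hW) α b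
      simp only [Real.rpow_two, sq_abs] at this
      refine this.trans ?_
      rw [mul_comm]
      have := N_nonneg (p+2) α
      gcongr
    have a1 := H U hU α h1
    have a2 := H V hV γ h2
    have b1 := row_sum_F U V W hV hW b (fun i => |α i|^p)
    have b2 := col_sum_F U V W hU hW b (fun i => |γ i|^p)
    rw [← b1] at a1
    rw [← b2] at a2
    calc _ = (∑ i, ∑ j, Complex.normSq ((Uᴴ * F W b * V) i j) * |α i|^p
        + ∑ i, ∑ j, Complex.normSq ((Uᴴ * F W b * V) i j) * |γ j|^p) / 2 := by
          rw [← sum_add_distrib, sum_div]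
          apply sum_congr rfl; intro i _
          rw [← sum_add_distrib, sum_div]
          apply sum_congr rfl; intro j _
          ring
      _ ≤ _ := by linarith

lemma entry_sub (U V : Matrix n n ℂ) (hU : Uᴴ * U = 1) (hV : Vᴴ * V = 1) (α γ : n → ℝ) (i j : n) :
    Complex.normSq ((Uᴴ * (F U α - F V γ) * V) i j) = (α i - γ j)^2 * ov U V i j := by
  have : Uᴴ * (F U α - F V γ) * V = Matrix.diagonal (fun i => (α i : ℂ)) * (Uᴴ * V)
      - (Uᴴ * V) * Matrix.diagonal (fun i => (γ i : ℂ)) := by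
    unfold F
    rw [Matrix.mul_sub, Matrix.sub_mul]
    congr 1
    · simp only [← Matrix.mul_assoc]; rw [hU, Matrix.one_mul]
    · simp only [Matrix.mul_assoc]; rw [hV, Matrix.mul_one]
  rw [this, Matrix.sub_apply, Matrix.diagonal_mul, Matrix.mul_diagonal, mul_comm _ ((γ j : ℝ) : ℂ), ← sub_mul,
    ← Complex.ofReal_sub, Complex.normSq_mul, Complex.normSq_ofReal, ov]
  ring

lemma F_trace_h (U V : Matrix n n ℂ) (hU : Uᴴ * U = 1) (hV : Vᴴ * V = 1)
    (α γ x y : n → ℝ) : (Matrix.trace ((F U α - F V γ) * (F U x - F V y))).re =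
      ∑ i, ∑ j, ov U V i j * ((α i - γ j) * (x i - y j)) := by
  have tr : ∀ (U : Matrix n n ℂ) (hU : Uᴴ * U = 1) (x : n → ℝ), (Matrix.trace (F U x)).re = ∑ i, x i := by
    intro U hU x
    rw [F, Matrix.trace_mul_comm, ← Matrix.mul_assoc, hU, Matrix.one_mul, Matrix.trace_diagonal,
      ← Complex.ofReal_sum, Complex.ofReal_re]
  have e : (F U α - F V γ) * (F U x - F V y) = F U α * F U x - F U α * F V y - F V γ * F U x + F V γ * F V y := by
    noncomm_ring
  rw [e, Matrix.trace_add, Matrix.trace_sub, Matrix.trace_sub, Matrix.trace_mul_comm (F V γ) (F U x),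
    Complex.add_re, Complex.sub_re, Complex.sub_re, F_mul U hU, F_mul V hV, tr U hU, tr V hV, trace_F, trace_F]
  have s1 : ∑ i, α i * x i = ∑ i, ∑ j, ov U V i j * (α i * x i) := by
    simp_rw [← sum_mul, ov_row U V hU hV, one_mul]
  have s2 : ∑ i, γ i * y i = ∑ i, ∑ j, ov U V i j * (γ j * y j) := by
    rw [sum_comm]
    simp_rw [← sum_mul, ov_col U V hU hV, one_mul]
  rw [s1, s2, ← sum_sub_distrib, ← sum_sub_distrib, ← sum_add_distrib]
  apply sum_congr rfl; intro i _
  rw [← sum_sub_distrib, ← sum_sub_distrib, ← sum_add_distrib]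
  apply sum_congr rfl; intro j _
  ring

lemma est (U V W : Matrix n n ℂ) (hU : Uᴴ * U = 1) (hV : Vᴴ * V = 1) (hW : Wᴴ * W = 1)
    (b α γ : n → ℝ) (p R : ℝ) (hp : 0 ≤ p) (h1 : N (p+2) α ≤ R) (h2 : N (p+2) γ ≤ R)
    (hF : F U α - F V γ = F W b) :
    (Matrix.trace (F W b * (F U (fun i => h p (α i)) - F V (fun i => h p (γ i))))).re
      ≤ (p+1) * (N (p+2) b ^ 2 * R ^ p) := by
  rw [← hF, F_trace_h U V hU hV]
  refine le_trans ?_ (mul_le_mul_of_nonneg_left (est_M U V W hU hV hW b α γ p R hp h1 h2) (by linarith))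
  rw [← hF]
  simp_rw [entry_sub U V hU hV, mul_sum]
  apply sum_le_sum; intro i _
  apply sum_le_sum; intro j _
  have := mul_le_mul_of_nonneg_left (scalar_main p (α i) (γ j) hp) (ov_nonneg U V i j)
  linarith

/-- Hölder -/
lemma holder_F (U V : Matrix n n ℂ) (hU : Uᴴ * U = 1) (hV : Vᴴ * V = 1) (α γ : n → ℝ) (p : ℝ) (hp : 0 ≤ p) :
    (Matrix.trace (F U α * F V (fun i => h p (γ i)))).re ≤ N (p+2) α * N (p+2) γ ^ (p+1) := by
  rw [trace_F]
  have := holderW 1 (p+1) (by norm_num) (by linarith) (ov U V) (ov_nonneg U V) (ov_row U V hU hV) (ov_col U V hU hV) α γ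
  rw [show 1 + (p+1) = p+2 by ring, Real.rpow_one] at this
  refine le_trans ?_ this
  apply sum_le_sum; intro i _
  apply sum_le_sum; intro j _
  apply mul_le_mul_of_nonneg_left _ (ov_nonneg U V i j)
  refine (le_abs_self _).trans ?_
  rw [abs_mul, abs_h p _ hp, Real.rpow_one]

lemma self_F (U : Matrix n n ℂ) (hU : Uᴴ * U = 1) (α : n → ℝ) (p : ℝ) (hp : 0 ≤ p) :
    (Matrix.trace (F U α * F U (fun i => h p (α i)))).re = N (p+2) α ^ (p+2) := by
  rw [F_mul U hU, N_rpow_self _ (by linarith), F, Matrix.trace_mul_comm, ← Matrix.mul_assoc, hU, Matrix.one_mul, Matrix.trace_diagonal,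
      ← Complex.ofReal_sum, Complex.ofReal_re]
  apply sum_congr rfl; intro i _
  rw [h, ← mul_assoc, ← sq, ← sq_abs, ← Real.rpow_two, mul_comm, ← Real.rpow_add' (abs_nonneg _) (by linarith)]

end

section
variable {n : Type*} [Fintype n] [DecidableEq n]

lemma exists_F (A : Matrix n n ℂ) (hA : A.IsHermitian) : ∃ (U : Matrix n n ℂ) (α : n → ℝ), Uᴴ * U = 1 ∧ A = F U α := by
  refine ⟨hA.eigenvectorUnitary, hA.eigenvalues, ?_, ?_⟩
  · exact Unitary.coe_star_mul_self hA.eigenvectorUnitary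
  · exact hA.spectral_theorem

lemma sum_eig {m : Type*} [Fintype m] (B : Matrix n n ℂ) (hB : B.IsHermitian) (β : m → ℝ)
    (h : B.charpoly = ∏ i, (Polynomial.X - Polynomial.C (β i : ℂ))) (f : ℝ → ℝ) :
    ∑ i, f (hB.eigenvalues i) = ∑ i, f (β i) := by
  have h1 := hB.roots_charpoly_eq_eigenvalues
  have h2 : B.charpoly.roots = Multiset.map (fun i => (β i : ℂ)) univ.val := by
    rw [h, Polynomial.roots_prod]
    · simp
    · simp [Finset.prod_ne_zero_iff, Polynomial.X_sub_C_ne_zero]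
  rw [h1] at h2
  have h3 := congrArg (fun s => (Multiset.map (fun z : ℂ => f z.re) s).sum) h2
  simpa [Multiset.map_map, Function.comp_def] using h3

lemma schatten_of_charpoly {m : Type*} [Fintype m] (q : ℝ) (A : Matrix n n ℂ) (β : m → ℝ)
    (h : (Aᴴ * A).charpoly = ∏ i, (Polynomial.X - Polynomial.C (β i : ℂ))) :
    schattenNorm q A = (∑ i, β i ^ (q/2)) ^ (1/q) := by
  unfold schattenNorm
  rw [sum_eig _ (Matrix.isHermitian_conjTranspose_mul_self A) β h (fun x => x ^ (q/2))]

lemma F_charpoly (U : Matrix n n ℂ) (hU : Uᴴ * U = 1) (x : n → ℝ) :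
    (F U x).charpoly = ∏ i, (Polynomial.X - Polynomial.C (x i : ℂ)) := by
  rw [F, Matrix.charpoly_mul_comm, ← Matrix.mul_assoc, hU, Matrix.one_mul, Matrix.charpoly_diagonal]

lemma schatten_F (q : ℝ) (U : Matrix n n ℂ) (hU : Uᴴ * U = 1) (α : n → ℝ) :
    schattenNorm q (F U α) = N q α := by
  rw [schatten_of_charpoly q (F U α) (fun i => α i * α i) (by rw [F_herm, F_mul U hU, F_charpoly U hU])]
  unfold N
  congr 1
  apply sum_congr rfl; intro i _
  rw [← abs_mul_abs_self, ← sq, ← Real.rpow_two, ← Real.rpow_mul (abs_nonneg _)]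
  congr 1; ring

lemma F_pow (U : Matrix n n ℂ) (hU : Uᴴ * U = 1) (x : n → ℝ) (k : ℕ) :
    F U x ^ k = F U (fun i => x i ^ k) := by
  induction k with
  | zero => simp [F, mul_eq_one_comm.mp hU]
  | succ k ih => rw [pow_succ, ih, F_mul U hU]; simp only [pow_succ]

lemma F_smul (U : Matrix n n ℂ) (x : n → ℝ) (c : ℝ) : F U (fun i => c * x i) = (c : ℂ) • F U x := by
  unfold F
  have : Matrix.diagonal (fun i => ((c * x i : ℝ) : ℂ)) = (c : ℂ) • Matrix.diagonal (fun i => (x i : ℂ)) := by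
    ext i j; by_cases hij : i = j <;> simp [hij, Matrix.diagonal_apply]
  rw [this, Matrix.mul_smul, Matrix.smul_mul]

lemma F_sum {ι : Type*} (s : Finset ι) (U : Matrix n n ℂ) (x : ι → n → ℝ) :
    F U (fun i => ∑ k ∈ s, x k i) = ∑ k ∈ s, F U (x k) := by
  unfold F
  rw [← Matrix.sum_mul, ← Matrix.mul_sum]
  congr 2
  ext i j; by_cases hij : i = j <;> simp [hij, Matrix.diagonal_apply, Matrix.sum_apply]

lemma tr_fun_zero (Y : Matrix n n ℂ) (V : Matrix n n ℂ) (hV : Vᴴ * V = 1) (γ : n → ℝ)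
    (h0 : ∀ k : ℕ, Matrix.trace (Y * F V γ ^ k) = 0) (f : ℝ → ℝ) :
    Matrix.trace (Y * F V (fun i => f (γ i))) = 0 := by
  classical
  set P := Lagrange.interpolate (univ.image γ) id f with hP
  have hPe : ∀ i, P.eval (γ i) = f (γ i) := fun i =>
    Lagrange.eval_interpolate_at_node (v := id) f (fun _ _ _ _ h => h) (mem_image_of_mem γ (mem_univ i))
  simp_rw [← hPe, Polynomial.eval_eq_sum_range]
  rw [F_sum]
  simp_rw [F_smul, ← F_pow V hV]
  rw [Matrix.mul_sum, Matrix.trace_sum]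
  apply sum_eq_zero; intro k _
  rw [Matrix.mul_smul, Matrix.trace_smul, h0, smul_zero]

lemma telescoping (f : ℝ → ℝ) (K : ℝ) (hK : 0 ≤ K)
    (hf : ∀ s t, 0 ≤ s → s < t → f t - f s ≤ 2 * (t - s) * t * K) : f 1 ≤ f 0 + K := by
  have step : ∀ m : ℕ, 0 < m → ∀ k : ℕ, f (k/m) ≤ f 0 + K * (k * (k+1)) / m^2 := by
    intro m hm k
    have hm' : (0:ℝ) < m := by exact_mod_cast hm
    induction k with
    | zero => simp
    | succ k ih =>
      have := hf (k/m) ((k+1 : ℕ)/m) (by positivity) (by gcongr; simp)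
      have e : 2 * (((k+1 : ℕ):ℝ)/m - k/m) * (((k+1 : ℕ):ℝ)/m) * K = K * (2 * (k+1)) / m^2 := by
        push_cast; field_simp; ring
      rw [e] at this
      have e2 : K * (((k+1 : ℕ):ℝ) * (((k+1:ℕ):ℝ)+1)) / m^2 = K * (k * (k+1)) / m^2 + K * (2 * (k+1)) / m^2 := by
        push_cast; ring
      rw [e2]; linarith
  apply le_of_forall_pos_le_add
  intro ε hε
  obtain ⟨m, hm⟩ := exists_nat_gt (K/ε)
  have hm0 : (0:ℝ) < m := lt_of_le_of_lt (by positivity) hm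
  have := step m (by exact_mod_cast hm0) m
  rw [div_self hm0.ne'] at this
  have e : K * ((m:ℝ) * (m+1)) / m^2 = K + K/m := by field_simp
  rw [e] at this
  have : K / m < ε := by
    rw [div_lt_iff₀ hm0]; rw [div_lt_iff₀ hε] at hm; linarith
  linarith

lemma herm_main (X Y : Matrix n n ℂ) (hX : X.IsHermitian) (hY : Y.IsHermitian)
    (h0 : ∀ k : ℕ, Matrix.trace (Y * X ^ k) = 0) (q : ℝ) (hq : 2 ≤ q) :
    schattenNorm q (X + Y) ^ 2 ≤ schattenNorm q X ^ 2 + (q - 1) * schattenNorm q Y ^ 2 := by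
  obtain ⟨p, rfl⟩ : ∃ p, q = p + 2 := ⟨q - 2, by ring⟩
  have hp : 0 ≤ p := by linarith
  obtain ⟨V, γ, hV, rfl⟩ := exists_F X hX
  obtain ⟨W, b, hW, rfl⟩ := exists_F Y hY
  have hT : ∀ t : ℝ, ∃ (U : Matrix n n ℂ) (α : n → ℝ), Uᴴ * U = 1 ∧ F V γ + (t:ℂ) • F W b = F U α := by
    intro t
    apply exists_F
    apply hX.add
    rw [← F_smul]; exact F_herm _ _
  choose U α hU hα using hT
  have hS : ∀ t : ℝ, schattenNorm (p+2) (F V γ + (t:ℂ) • F W b) = N (p+2) (α t) := by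
    intro t; rw [hα, schatten_F _ _ (hU t)]
  have hS0 : schattenNorm (p+2) (F V γ) = N (p+2) (α 0) := by
    have := hS 0; simpa using this
  have hS1 : schattenNorm (p+2) (F V γ + F W b) = N (p+2) (α 1) := by
    have := hS 1; simpa using this
  rw [hS1, hS0, schatten_F _ _ hW]
  have hγ : N (p+2) (α 0) = N (p+2) γ := by rw [← hS0, schatten_F _ _ hV]
  have htr := tr_fun_zero (F W b) V hV γ h0 (h p)
  have hmono : ∀ t, N (p+2) γ ≤ N (p+2) (α t) := by
    intro t
    have e1 := self_F V hV γ p hp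
    have e2 := holder_F (U t) V (hU t) hV (α t) γ p hp
    rw [← hα, Matrix.add_mul, Matrix.trace_add, Matrix.smul_mul, Matrix.trace_smul, htr, smul_zero, add_zero, e1] at e2
    rcases (N_nonneg (p+2) γ).eq_or_lt with hz | hz
    · rw [← hz]; exact N_nonneg _ _
    · rw [show p + 2 = (p+1) + 1 by ring] at e2 hz ⊢
      rw [Real.rpow_add_one hz.ne', mul_comm] at e2
      exact le_of_mul_le_mul_right e2 (by positivity)
  set K := (p + 2 - 1) * N (p+2) b ^ 2 with hK
  have hK0 : 0 ≤ K := mul_nonneg (by linarith) (sq_nonneg _)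
  refine telescoping (fun t => N (p+2) (α t) ^ 2) K hK0 ?_
  intro s t hs hst
  have ht : 0 < t := lt_of_le_of_lt hs hst
  set D := (Matrix.trace (F W b * F (U t) (fun i => h p (α t i)))).re with hD
  have a1 : N (p+2) (α t) ^ (p+2) - N (p+2) (α s) * N (p+2) (α t) ^ (p+1) ≤ (t - s) * D := by
    have e1 := self_F (U t) (hU t) (α t) p hp
    have e2 := holder_F (U s) (U t) (hU s) (hU t) (α s) (α t) p hp
    have e3 : (Matrix.trace (F (U t) (α t) * F (U t) (fun i => h p (α t i)))).re
      - (Matrix.trace (F (U s) (α s) * F (U t) (fun i => h p (α t i)))).re = (t - s) * D := by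
      rw [← hα s, ← Complex.sub_re, ← Matrix.trace_sub, ← Matrix.sub_mul]
      have : F (U t) (α t) - (F V γ + (s:ℂ) • F W b) = ((t - s : ℝ) : ℂ) • F W b := by
        rw [← hα t]; push_cast; module
      rw [this, Matrix.smul_mul, Matrix.trace_smul, smul_eq_mul, Complex.re_ofReal_mul]
    linarith
  have a2 : D ≤ t * K * N (p+2) (α t) ^ p := by
    have hd : F (U t) (α t) - F V γ = F W (fun i => t * b i) := by
      rw [← hα t, F_smul]; simp
    have e := est (U t) V W (hU t) hV hW (fun i => t * b i) (α t) γ p (N (p+2) (α t)) hp le_rfl (hmono t) hd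
    have hN : N (p+2) (fun i => t * b i) = t * N (p+2) b := by
      unfold N
      simp_rw [abs_mul, Real.mul_rpow (abs_nonneg _) (abs_nonneg _), ← mul_sum]
      rw [Real.mul_rpow (by positivity) (by positivity), ← Real.rpow_mul (abs_nonneg _), abs_of_pos ht,
        mul_one_div_cancel (by linarith), Real.rpow_one]
    rw [hN, F_smul, Matrix.smul_mul, Matrix.trace_smul, smul_eq_mul, Complex.re_ofReal_mul, Matrix.mul_sub,
      Matrix.trace_sub, htr, sub_zero, ← hD] at e
    refine le_of_mul_le_mul_left ?_ ht
    calc _ ≤ _ := e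
      _ = _ := by rw [hK]; ring
  have a3 : N (p+2) (α t) * (N (p+2) (α t) - N (p+2) (α s)) ≤ (t - s) * t * K := by
    rcases (N_nonneg (p+2) (α t)).eq_or_lt with hz | hz
    · rw [← hz, zero_mul]
      have : 0 ≤ t - s := by linarith
      positivity
    · generalize N (p+2) (α t) = x at *
      generalize N (p+2) (α s) = y at *
      have hxp : 0 < x ^ p := by positivity
      have q1 : x ^ (p+1) = x^p * x := Real.rpow_add_one hz.ne' p
      have q2 : x ^ (p+2) = x^p * x * x := by
        rw [show p + 2 = p + 1 + 1 by ring, Real.rpow_add_one hz.ne', q1]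
      rw [q1, q2] at a1
      have : (t - s) * D ≤ (t - s) * (t * K * x^p) := mul_le_mul_of_nonneg_left a2 (by linarith)
      refine le_of_mul_le_mul_left ?_ hxp
      linarith
  have := sq_nonneg (N (p+2) (α t) - N (p+2) (α s))
  show N (p+2) (α t) ^ 2 - N (p+2) (α s) ^ 2 ≤ _
  nlinarith

/-- Hermitian dilation -/
noncomputable def Dil (A : Matrix n n ℂ) : Matrix (n ⊕ n) (n ⊕ n) ℂ := Matrix.fromBlocks 0 A Aᴴ 0

lemma Dil_herm (A : Matrix n n ℂ) : (Dil A).IsHermitian := by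
  unfold Dil Matrix.IsHermitian
  rw [Matrix.fromBlocks_conjTranspose]; simp

lemma Dil_add (A B : Matrix n n ℂ) : Dil (A + B) = Dil A + Dil B := by
  unfold Dil
  rw [Matrix.fromBlocks_add]; simp

open scoped ComplexOrder in
lemma schatten_Dil (q : ℝ) (A : Matrix n n ℂ) :
    schattenNorm q (Dil A) = 2 ^ (1/q) * schattenNorm q A := by
  set e := (Matrix.isHermitian_conjTranspose_mul_self A).eigenvalues with he
  have he0 : ∀ i, 0 ≤ e i := (Matrix.posSemidef_conjTranspose_mul_self A).eigenvalues_nonneg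
  rw [schatten_of_charpoly q (Dil A) (Sum.elim e e)]
  · rw [Fintype.sum_sum_type]
    simp only [Sum.elim_inl, Sum.elim_inr]
    rw [← two_mul, Real.mul_rpow (by norm_num) (sum_nonneg fun i _ => Real.rpow_nonneg (he0 i) _)]
    rfl
  · have hc := (Matrix.isHermitian_conjTranspose_mul_self A).charpoly_eq
    rw [(Dil_herm A).eq, Dil, Matrix.fromBlocks_multiply]
    simp only [Matrix.zero_mul, Matrix.mul_zero, zero_add, add_zero]
    rw [Matrix.charpoly_fromBlocks_zero₁₂, Matrix.charpoly_mul_comm, hc, Fintype.prod_sum_type]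
    rfl

end

section
variable {J I : Type*} [Fintype J] [Fintype I] [DecidableEq J] [DecidableEq I]

lemma trace_kron (Y : Matrix (J × I) (J × I) ℂ) (hY : ptraceRight Y = 0) (Z : Matrix J J ℂ) :
    Matrix.trace (Y * (Z ⊗ₖ (1 : Matrix I I ℂ))) = 0 := by
  have hY' : ∀ a b, ∑ i, Y (a, i) (b, i) = 0 := fun a b => congrFun (congrFun hY a) b
  have : Matrix.trace (Y * (Z ⊗ₖ (1 : Matrix I I ℂ))) = ∑ a, ∑ b, (∑ i, Y (a, i) (b, i)) * Z b a := by
    simp only [Matrix.trace, Matrix.diag_apply, Matrix.mul_apply, Fintype.sum_prod_type,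
      Matrix.kroneckerMap_apply, Matrix.one_apply, mul_ite, mul_one, mul_zero, sum_ite_eq', sum_ite_eq, mem_univ, if_true]
    apply sum_congr rfl; intro a _
    rw [sum_comm]
    simp only [sum_mul]
  rw [this]; simp [hY']

lemma ptrace_conj (Y : Matrix (J × I) (J × I) ℂ) (hY : ptraceRight Y = 0) : ptraceRight Yᴴ = 0 := by
  have hY' : ∀ a b, ∑ i, Y (a, i) (b, i) = 0 := fun a b => congrFun (congrFun hY a) b
  ext a b
  simp only [ptraceRight, Matrix.of_apply, Matrix.conjTranspose_apply, Matrix.zero_apply]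
  rw [← star_sum, hY', star_zero]

lemma dil_pow (Xj : Matrix J J ℂ) (k : ℕ) : ∃ P Q R S : Matrix J J ℂ,
    Dil (Xj ⊗ₖ (1 : Matrix I I ℂ)) ^ k = Matrix.fromBlocks (P ⊗ₖ (1 : Matrix I I ℂ)) (Q ⊗ₖ (1 : Matrix I I ℂ))
      (R ⊗ₖ (1 : Matrix I I ℂ)) (S ⊗ₖ (1 : Matrix I I ℂ)) := by
  induction k with
  | zero => exact ⟨1, 0, 0, 1, by simp [Matrix.fromBlocks_one]⟩
  | succ k ih =>
    obtain ⟨P, Q, R, S, h⟩ := ih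
    refine ⟨Q * Xjᴴ, P * Xj, S * Xjᴴ, R * Xj, ?_⟩
    rw [pow_succ, h, Dil, Matrix.fromBlocks_multiply, Matrix.conjTranspose_kronecker]
    simp only [Matrix.mul_zero, zero_add, add_zero, Matrix.conjTranspose_one, ← Matrix.mul_kronecker_mul, Matrix.mul_one]

lemma tr_blocks {m : Type*} [Fintype m] (A B C D : Matrix m m ℂ) :
    Matrix.trace (Matrix.fromBlocks A B C D) = Matrix.trace A + Matrix.trace D := by
  simp [Matrix.trace, Fintype.sum_sum_type]

lemma dil_trace (Y : Matrix (J × I) (J × I) ℂ) (hY : ptraceRight Y = 0) (Xj : Matrix J J ℂ) (k : ℕ) :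
    Matrix.trace (Dil Y * Dil (Xj ⊗ₖ (1 : Matrix I I ℂ)) ^ k) = 0 := by
  obtain ⟨P, Q, R, S, h⟩ := dil_pow (I := I) Xj k
  rw [h, Dil, Matrix.fromBlocks_multiply, tr_blocks]
  simp only [Matrix.zero_mul, zero_add, add_zero]
  rw [trace_kron Y hY, trace_kron _ (ptrace_conj Y hY), add_zero]

end
end USS

/-- **Uniform smoothness for a subsystem.** If `Tr_i(Y) = 0` and `X = X_j ⊗ I_i`, then for
`q ≥ 2`, `‖X + Y‖_q² ≤ ‖X‖_q² + (q−1)·‖Y‖_q²`. -/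
theorem uniform_smoothness_subsystem
    {J I : Type*} [Fintype J] [Fintype I] [DecidableEq J] [DecidableEq I]
    (X Y : Matrix (J × I) (J × I) ℂ)
    (Xj : Matrix J J ℂ) (hX : X = Xj ⊗ₖ (1 : Matrix I I ℂ))
    (hY : ptraceRight Y = 0)
    (q : ℝ) (hq : 2 ≤ q) :
    schattenNorm q (X + Y) ^ 2 ≤ schattenNorm q X ^ 2 + (q - 1) * schattenNorm q Y ^ 2 := by
  have hm := USS.herm_main (USS.Dil X) (USS.Dil Y) (USS.Dil_herm X) (USS.Dil_herm Y)
    (by intro k; rw [hX]; exact USS.dil_trace Y hY Xj k) q hq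
  rw [← USS.Dil_add, USS.schatten_Dil, USS.schatten_Dil, USS.schatten_Dil] at hm
  have hc : (0:ℝ) < (2 ^ (1/q)) ^ 2 := by positivity
  refine le_of_mul_le_mul_left ?_ hc
  calc _ = (2 ^ (1/q) * schattenNorm q (X + Y)) ^ 2 := by ring
    _ ≤ _ := hm
    _ = _ := by ring
end

section
/- Let ℋ = ⊗_{x=1}^m 𝒬_x be a tensor product of m finite-dimensional complex Hilbert spaces (qudits), and let H = ∑_{1≤i₁<⋯<i_k≤m} H_{i₁⋯i_k} be a k-local Hamiltonian, where each term H_{i₁⋯i_k} acts as the identity on all qudits outside {i₁,…,i_k} and has vanishing partial trace over each of the qudits i₁,…,i_k. Then for every real q ≥ 2, ‖H‖_q ≤ (q−1)^{k/2} · ‖I‖_q · ‖H‖_(2), where ‖H‖_(2) := √(∑_{1≤i₁<⋯<i_k≤m} ‖H_{i₁⋯i_k}‖_∞²). -/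
open scoped Kronecker Matrix

/-- The operator norm (largest singular value) of a complex matrix. -/
noncomputable def opNorm {n : Type*} [Fintype n] [DecidableEq n] (A : Matrix n n ℂ) : ℝ :=
  ‖Matrix.toEuclideanCLM (𝕜 := ℂ) A‖

/-- An operator on the qudits `Q x`, `x : Fin m`, is supported on the set `S` if (after
reindexing along the tensor factorization of the configuration space) it has the form
`B ⊗ 1`, i.e. it acts as the identity on all qudits outside `S`. -/
def SupportedOn {m : ℕ} (Q : Fin m → Type*) [∀ x, Fintype (Q x)] [∀ x, DecidableEq (Q x)]
    (S : Finset (Fin m)) (A : Matrix (∀ x, Q x) (∀ x, Q x) ℂ) : Prop :=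
  ∃ B : Matrix (∀ x : {y : Fin m // y ∈ S}, Q x) (∀ x : {y : Fin m // y ∈ S}, Q x) ℂ,
    A = Matrix.reindex (Equiv.piEquivPiSubtypeProd (· ∈ S) Q).symm
          (Equiv.piEquivPiSubtypeProd (· ∈ S) Q).symm
          (B ⊗ₖ (1 : Matrix (∀ x : {y : Fin m // ¬ y ∈ S}, Q x)
                            (∀ x : {y : Fin m // ¬ y ∈ S}, Q x) ℂ))

/-- The partial trace of `A` over the qudit at site `x` vanishes. -/
def TracelessAt {m : ℕ} (Q : Fin m → Type*) [∀ x, Fintype (Q x)] [∀ x, DecidableEq (Q x)]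
    (x : Fin m) (A : Matrix (∀ y, Q y) (∀ y, Q y) ℂ) : Prop :=
  ∀ f g : ∀ y, Q y,
    ∑ v : Q x, A (Function.update f x v) (Function.update g x v) = 0


/-! ### Scalar inequalities -/

noncomputable def hpow (q x : ℝ) : ℝ := |x| ^ (q - 2) * x

lemma hpow_neg (q x : ℝ) : hpow q (-x) = - hpow q x := by simp [hpow]

lemma hpow_of_nonneg {q x : ℝ} (hq : 2 ≤ q) (hx : 0 ≤ x) : hpow q x = x ^ (q - 1) := by
  unfold hpow
  rw [abs_of_nonneg hx]
  rcases hx.eq_or_lt with rfl | hx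
  · rw [mul_zero, Real.zero_rpow (by linarith)]
  · rw [← Real.rpow_add_one hx.ne']; congr 1; ring

lemma hpow_mul_self {q : ℝ} (hq : 2 ≤ q) (x : ℝ) : hpow q x * x = |x| ^ q := by
  unfold hpow
  rcases eq_or_ne x 0 with rfl | hx
  · rw [mul_zero, abs_zero, Real.zero_rpow (by linarith)]
  · have : 0 < |x| := abs_pos.2 hx
    rw [mul_assoc, ← abs_mul_abs_self x, ← mul_assoc, ← Real.rpow_add_one this.ne',
      ← Real.rpow_add_one this.ne']
    congr 1; ring

lemma abs_hpow {q : ℝ} (hq : 2 ≤ q) (x : ℝ) : |hpow q x| = |x| ^ (q - 1) := by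
  rw [← hpow_of_nonneg hq (abs_nonneg x)]
  unfold hpow
  rw [abs_mul, abs_abs, abs_of_nonneg (Real.rpow_nonneg (abs_nonneg x) _)]

lemma klein_scalar {q : ℝ} (hq : 2 ≤ q) (a b : ℝ) :
    |b| ^ q + q * (hpow q b * (a - b)) ≤ |a| ^ q := by
  have hc : (q).HolderConjugate (q / (q - 1)) := Real.HolderConjugate.conjExponent (by linarith)
  have h1 := Real.young_inequality_of_nonneg (abs_nonneg a)
    (Real.rpow_nonneg (abs_nonneg b) (q - 1)) hc
  rw [← Real.rpow_mul (abs_nonneg b), mul_div_cancel₀ q (by linarith : q - 1 ≠ 0)] at h1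
  have h2 : hpow q b * a ≤ |a| * |b| ^ (q - 1) := by
    rw [← abs_hpow hq, mul_comm, ← abs_mul]; exact le_abs_self _
  have h3 := hpow_mul_self hq b
  have h4 : q * (hpow q b * a) ≤ |a| ^ q + (q - 1) * |b| ^ q := by
    calc q * (hpow q b * a) ≤ q * (|a| ^ q / q + |b| ^ q / (q / (q - 1))) := by
            apply mul_le_mul_of_nonneg_left (h2.trans h1) (by linarith)
      _ = _ := by
        have : q - 1 ≠ 0 := by linarith
        field_simp
  have : q * (hpow q b * (a - b)) = q * (hpow q b * a) - q * |b| ^ q := by rw [← h3]; ring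
  linarith

/-- tangent line inequality for `x^r`, `r ≥ 1`. -/
lemma tangent_ge {r : ℝ} (hr : 1 ≤ r) {a b : ℝ} (ha : 0 < a) (hb : 0 ≤ b) :
    a ^ r + r * a ^ (r - 1) * (b - a) ≤ b ^ r := by
  have h := one_add_mul_self_le_rpow_one_add (s := b / a - 1)
    (by have := div_nonneg hb ha.le; linarith) hr
  have e : 1 + (b / a - 1) = b / a := by ring
  rw [e, Real.div_rpow hb ha.le, le_div_iff₀ (Real.rpow_pos_of_pos ha r)] at h
  have h3 : a ^ r = a ^ (r - 1) * a := by rw [← Real.rpow_add_one ha.ne']; congr 1; ring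
  calc _ = (1 + r * (b / a - 1)) * a ^ r := by rw [h3]; field_simp
    _ ≤ _ := h

lemma tangent_le {r : ℝ} (hr0 : 0 ≤ r) (hr : r ≤ 1) {a b : ℝ} (ha : 0 < a) (hb : 0 ≤ b) :
    b ^ r ≤ a ^ r + r * a ^ (r - 1) * (b - a) := by
  have h := rpow_one_add_le_one_add_mul_self (s := b / a - 1)
    (by have := div_nonneg hb ha.le; linarith) hr0 hr
  have e : 1 + (b / a - 1) = b / a := by ring
  rw [e, Real.div_rpow hb ha.le, div_le_iff₀ (Real.rpow_pos_of_pos ha r)] at h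
  have h3 : a ^ r = a ^ (r - 1) * a := by rw [← Real.rpow_add_one ha.ne']; congr 1; ring
  calc _ ≤ (1 + r * (b / a - 1)) * a ^ r := h
    _ = _ := by rw [h3]; field_simp

/-- The kernel bounding the divided differences. -/
noncomputable def Kker (q a b : ℝ) : ℝ :=
  if 3 ≤ q then (|a| ^ (q - 2) + |b| ^ (q - 2)) / 2 else ((|a| + |b|) / 2) ^ (q - 2)

lemma Kker_comm (q a b : ℝ) : Kker q a b = Kker q b a := by
  unfold Kker; split_ifs <;> simp [add_comm]

lemma Kker_neg_left (q a b : ℝ) : Kker q (-a) b = Kker q a b := by simp [Kker]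
lemma Kker_neg_right (q a b : ℝ) : Kker q a (-b) = Kker q a b := by simp [Kker]

/-- Hermite-Hadamard type bound -/
lemma hh_scalar {q : ℝ} (hq : 2 ≤ q) {a b : ℝ} (hb : 0 ≤ b) (hab : b ≤ a) :
    a ^ (q - 1) - b ^ (q - 1) ≤ (q - 1) * (a - b) * Kker q a b := by
  unfold Kker
  rw [abs_of_nonneg hb, abs_of_nonneg (hb.trans hab)]
  split_ifs with h3
  · let G : ℝ → ℝ := fun x => (q - 1) * (x - b) * ((x ^ (q - 2) + b ^ (q - 2)) / 2)
        - (x ^ (q - 1) - b ^ (q - 1))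
    have hG : MonotoneOn G (Set.Ici b) := by
      apply monotoneOn_of_hasDerivWithinAt_nonneg (f' := fun x => 
        (q - 1) * ((x ^ (q - 2) + b ^ (q - 2)) / 2) +
          (q - 1) * (x - b) * (((q - 2) * x ^ (q - 2 - 1)) / 2) - (q - 1) * x ^ (q - 1 - 1))
        (convex_Ici b)
      · apply Continuous.continuousOn
        have c1 : Continuous fun x : ℝ => x ^ (q - 2) := Real.continuous_rpow_const (by linarith)
        have c2 : Continuous fun x : ℝ => x ^ (q - 1) := Real.continuous_rpow_const (by linarith)
        fun_prop
      · intro x hx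
        rw [interior_Ici] at hx
        have hx0 : 0 < x := lt_of_le_of_lt hb hx
        apply HasDerivAt.hasDerivWithinAt
        have d1 := Real.hasDerivAt_rpow_const (x := x) (p := q - 2) (Or.inl hx0.ne')
        have d2 := Real.hasDerivAt_rpow_const (x := x) (p := q - 1) (Or.inl hx0.ne')
        have d3 := (((hasDerivAt_id x).sub_const b).const_mul (q - 1)).mul
          ((d1.add_const (b ^ (q - 2))).div_const 2)
        convert d3.sub (d2.sub_const (b ^ (q - 1))) using 1
        · rfl
        · simp only [id, mul_one]
      · intro x hx
        rw [interior_Ici] at hx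
        have hx0 : 0 < x := lt_of_le_of_lt hb hx
        have := tangent_ge (r := q - 2) (by linarith) hx0 hb
        rw [show q - 1 - 1 = q - 2 by ring]
        have h5 : 0 ≤ (q - 1) / 2 * (b ^ (q - 2) - (x ^ (q - 2) +
          (q - 2) * x ^ (q - 2 - 1) * (b - x))) := mul_nonneg (by linarith) (by linarith)
        nlinarith [h5]
    have := hG (Set.mem_Ici.2 le_rfl) (Set.mem_Ici.2 hab) hab
    simp only [G, sub_self, mul_zero, zero_mul] at this
    linarith
  · let G : ℝ → ℝ := fun x => (q - 1) * (x - b) * (((x + b) / 2) ^ (q - 2))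
        - (x ^ (q - 1) - b ^ (q - 1))
    have hG : MonotoneOn G (Set.Ici b) := by
      apply monotoneOn_of_hasDerivWithinAt_nonneg (f' := fun x => 
        (q - 1) * (((x + b) / 2) ^ (q - 2)) +
          (q - 1) * (x - b) * ((1 / 2) * (q - 2) * ((x + b) / 2) ^ (q - 2 - 1))
            - (q - 1) * x ^ (q - 1 - 1))
        (convex_Ici b)
      · apply Continuous.continuousOn
        have c1 : Continuous fun x : ℝ => x ^ (q - 2) := Real.continuous_rpow_const (by linarith)
        have c2 : Continuous fun x : ℝ => x ^ (q - 1) := Real.continuous_rpow_const (by linarith)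
        have c3 : Continuous fun x : ℝ => ((x + b) / 2) ^ (q - 2) := 
          c1.comp (by fun_prop : Continuous fun x : ℝ => (x + b) / 2)
        fun_prop
      · intro x hx
        rw [interior_Ici] at hx
        have hx0 : 0 < x := lt_of_le_of_lt hb hx
        apply HasDerivAt.hasDerivWithinAt
        have d0 : HasDerivAt (fun x : ℝ => (x + b) / 2) (1 / 2) x :=
          ((hasDerivAt_id x).add_const b).div_const 2
        have d1 := d0.rpow_const (p := q - 2) (Or.inl (by positivity))
        have d2 := Real.hasDerivAt_rpow_const (x := x) (p := q - 1) (Or.inl hx0.ne')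
        have d3 := (((hasDerivAt_id x).sub_const b).const_mul (q - 1)).mul d1
        convert d3.sub (d2.sub_const (b ^ (q - 1))) using 1
        · rfl
        · simp only [id, mul_one]
      · intro x hx
        rw [interior_Ici] at hx
        have hx0 : 0 < x := lt_of_le_of_lt hb hx
        have := tangent_le (r := q - 2) (by linarith) (by linarith)
          (show 0 < (x + b) / 2 by positivity) hx0.le
        rw [show q - 1 - 1 = q - 2 by ring]
        have h5 : 0 ≤ (q - 1) * ((((x + b) / 2) ^ (q - 2) +
          (q - 2) * ((x + b) / 2) ^ (q - 2 - 1) * (x - (x + b) / 2)) - x ^ (q - 2)) :=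
          mul_nonneg (by linarith) (by linarith)
        nlinarith [h5]
    have := hG (Set.mem_Ici.2 le_rfl) (Set.mem_Ici.2 hab) hab
    simp only [G, sub_self, mul_zero, zero_mul] at this
    linarith

lemma opp_scalar {q : ℝ} (hq : 2 ≤ q) {a c : ℝ} (ha : 0 ≤ a) (hc : 0 ≤ c) :
    a ^ (q - 1) + c ^ (q - 1) ≤ (q - 1) * (a + c) * Kker q a c := by
  unfold Kker
  rw [abs_of_nonneg ha, abs_of_nonneg hc]
  have e : ∀ x : ℝ, 0 ≤ x → x ^ (q - 1) = x ^ (q - 2) * x := by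
    intro x hx
    rcases hx.eq_or_lt with rfl | hx
    · rw [Real.zero_rpow (by linarith)]; simp
    · rw [← Real.rpow_add_one hx.ne']; congr 1; ring
  have na := Real.rpow_nonneg ha (q - 2)
  have nc := Real.rpow_nonneg hc (q - 2)
  split_ifs with h3
  · rw [e a ha, e c hc]
    have h1 : a ^ (q - 2) * a + c ^ (q - 2) * c ≤ (a + c) * (a ^ (q - 2) + c ^ (q - 2)) := by
      nlinarith [mul_nonneg na hc, mul_nonneg nc ha]
    have h2 : 0 ≤ ((q - 1) / 2 - 1) * ((a + c) * (a ^ (q - 2) + c ^ (q - 2))) :=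
      mul_nonneg (by linarith) (by positivity)
    nlinarith
  · have h1 : a ^ (q - 1) + c ^ (q - 1) ≤ (a + c) ^ (q - 1) := by
      rw [e a ha, e c hc, e _ (add_nonneg ha hc)]
      have g1 : a ^ (q - 2) ≤ (a + c) ^ (q - 2) :=
        Real.rpow_le_rpow ha (by linarith) (by linarith)
      have g2 : c ^ (q - 2) ≤ (a + c) ^ (q - 2) :=
        Real.rpow_le_rpow hc (by linarith) (by linarith)
      nlinarith [mul_le_mul_of_nonneg_right g1 ha, mul_le_mul_of_nonneg_right g2 hc]
    have h2 := rpow_one_add_le_one_add_mul_self (s := 1) (by norm_num)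
      (show 0 ≤ q - 2 by linarith) (by linarith)
    rw [Real.div_rpow (by positivity) (by norm_num)]
    refine h1.trans ?_
    rw [e _ (add_nonneg ha hc)]
    have h4 : (0 : ℝ) < 2 ^ (q - 2) := by positivity
    rw [mul_div_assoc', le_div_iff₀ h4]
    norm_num at h2
    have h5 : (0 : ℝ) ≤ (a + c) ^ (q - 2) * (a + c) := by positivity
    nlinarith [mul_le_mul_of_nonneg_left h2 h5]

lemma hpow_diff {q : ℝ} (hq : 2 ≤ q) (a b : ℝ) :
    (hpow q a - hpow q b) * (a - b) ≤ (q - 1) * ((a - b) ^ 2 * Kker q a b) := by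
  -- both nonnegative
  have key1 : ∀ a b : ℝ, 0 ≤ b → b ≤ a →
      (hpow q a - hpow q b) * (a - b) ≤ (q - 1) * ((a - b) ^ 2 * Kker q a b) := by
    intro a b hb hab
    rw [hpow_of_nonneg hq hb, hpow_of_nonneg hq (hb.trans hab)]
    nlinarith [mul_le_mul_of_nonneg_right (hh_scalar hq hb hab) (sub_nonneg.2 hab)]
  have key2 : ∀ a b : ℝ, 0 ≤ b → 0 ≤ a →
      (hpow q a - hpow q b) * (a - b) ≤ (q - 1) * ((a - b) ^ 2 * Kker q a b) := by
    intro a b hb ha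
    rcases le_total b a with h | h
    · exact key1 a b hb h
    · have := key1 b a ha h
      rw [Kker_comm] at this
      linarith
  have key3 : ∀ a b : ℝ, b ≤ 0 → 0 ≤ a →
      (hpow q a - hpow q b) * (a - b) ≤ (q - 1) * ((a - b) ^ 2 * Kker q a b) := by
    intro a b hb ha
    obtain ⟨c, rfl⟩ : ∃ c, b = -c := ⟨-b, by ring⟩
    have hc : 0 ≤ c := by linarith
    rw [hpow_neg, Kker_neg_right, hpow_of_nonneg hq ha, hpow_of_nonneg hq hc]
    nlinarith [mul_le_mul_of_nonneg_right (opp_scalar hq ha hc) (add_nonneg ha hc)]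
  rcases le_total 0 a with ha | ha <;> rcases le_total 0 b with hb | hb
  · exact key2 a b hb ha
  · exact key3 a b hb ha
  · have := key3 b a ha hb
    rw [Kker_comm] at this
    linarith
  · have := key2 (-a) (-b) (by linarith) (by linarith)
    rw [Kker_neg_left, Kker_neg_right, hpow_neg, hpow_neg] at this
    nlinarith

/-! ### A differential inequality -/

lemma ode_bound {f p : ℝ → ℝ} {q C : ℝ} (hq : 2 ≤ q) (hC : 0 ≤ C)
    (h1 : ∀ s t, f s + q * ((t - s) * p s) ≤ f t)
    (h2 : ∀ s t, (p t - p s) * (t - s) ≤ C * (t - s) ^ 2 * (max (f s) (f t)) ^ ((q - 2) / q))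
    (hp : p 0 = 0) (hf : 0 < f 0) :
    f 1 ^ (2 / q) ≤ f 0 ^ (2 / q) + C := by
  have hq0 : 0 < q := by linarith
  have f_ge : ∀ t, f 0 ≤ f t := fun t => by simpa [hp] using h1 0 t
  have fpos : ∀ t, 0 < f t := fun t => hf.trans_le (f_ge t)
  have pmono : ∀ s t, 0 ≤ (p t - p s) * (t - s) := by
    intro s t
    have a := h1 s t
    have b := h1 t s
    have : 0 ≤ q * ((p t - p s) * (t - s)) := by nlinarith
    exact nonneg_of_mul_nonneg_right this hq0
  have pnn : ∀ s, 0 ≤ s → 0 ≤ p s := by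
    intro s hs
    rcases hs.eq_or_lt with rfl | hs
    · rw [hp]
    · have := pmono 0 s
      rw [hp, sub_zero, sub_zero] at this
      exact nonneg_of_mul_nonneg_left this hs
  have fmono : ∀ s t, 0 ≤ s → s ≤ t → f s ≤ f t := by
    intro s t hs hst
    have := h1 s t
    have : 0 ≤ q * ((t - s) * p s) :=
      mul_nonneg hq0.le (mul_nonneg (by linarith) (pnn s hs))
    linarith
  set M : ℝ := f 1 ^ ((q - 2) / q) with hM
  have hr : 0 ≤ (q - 2) / q := div_nonneg (by linarith) hq0.le
  have quad : ∀ s ∈ Set.Icc (0 : ℝ) 1, ∀ t ∈ Set.Icc (0 : ℝ) 1,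
      |f t - f s - (t - s) * (q * p s)| ≤ q * C * M * (t - s) ^ 2 := by
    intro s hs t ht
    have a := h1 s t
    have b := h1 t s
    have c := h2 s t
    have hmax : (max (f s) (f t)) ^ ((q - 2) / q) ≤ M := by
      apply Real.rpow_le_rpow (le_max_of_le_left (fpos s).le) _ hr
      exact max_le (fmono _ _ hs.1 hs.2) (fmono _ _ ht.1 ht.2)
    have d : (p t - p s) * (t - s) ≤ C * (t - s) ^ 2 * M :=
      c.trans (mul_le_mul_of_nonneg_left hmax (by positivity))
    have e : q * ((p t - p s) * (t - s)) ≤ q * (C * (t - s) ^ 2 * M) :=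
      mul_le_mul_of_nonneg_left d hq0.le
    rw [abs_le]
    constructor <;> nlinarith
  have der : ∀ s ∈ Set.Icc (0 : ℝ) 1, HasDerivWithinAt f (q * p s) (Set.Icc 0 1) s := by
    intro s hs
    rw [hasDerivWithinAt_iff_isLittleO]
    have h3 : (fun t => f t - f s - (t - s) • (q * p s)) =O[nhdsWithin s (Set.Icc 0 1)]
        fun t => (t - s) ^ 2 := by
      apply Asymptotics.IsBigO.of_bound (q * C * M)
      filter_upwards [self_mem_nhdsWithin] with t ht
      rw [Real.norm_eq_abs, Real.norm_eq_abs, abs_of_nonneg (sq_nonneg (t - s))]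
      exact quad s hs t ht
    apply h3.trans_isLittleO
    have h4 : (fun t : ℝ => t - s) =o[nhdsWithin s (Set.Icc 0 1)] fun _ => (1 : ℝ) := by
      rw [Asymptotics.isLittleO_one_iff]
      have : Filter.Tendsto (fun t : ℝ => t - s) (nhds s) (nhds (s - s)) :=
        (continuous_id.sub continuous_const).tendsto s
      rw [sub_self] at this
      exact this.mono_left nhdsWithin_le_nhds
    simpa [sq] using h4.mul_isBigO (Asymptotics.isBigO_refl (fun t : ℝ => t - s) _)
  let G : ℝ → ℝ := fun t => f t ^ (2 / q) - C * t ^ 2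
  have hG : AntitoneOn G (Set.Icc 0 1) := by
    apply antitoneOn_of_hasDerivWithinAt_nonpos (convex_Icc 0 1)
      (f' := fun t => q * p t * (2 / q) * f t ^ (2 / q - 1) - C * (2 * t))
    · intro s hs
      have := ((der s hs).rpow_const (p := 2 / q) (Or.inl (fpos s).ne')).continuousWithinAt
      exact this.sub (by fun_prop)
    · intro s hs
      have hs' := interior_subset hs
      have d1 := ((der s hs').rpow_const (p := 2 / q) (Or.inl (fpos s).ne'))
      have d2 : HasDerivAt (fun t : ℝ => C * t ^ 2) (C * (2 * s)) s := by
        simpa using (hasDerivAt_pow 2 s).const_mul C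
      exact (d1.mono interior_subset).sub d2.hasDerivWithinAt
    · intro s hs
      rw [interior_Icc] at hs
      have c := h2 0 s
      rw [hp, sub_zero, sub_zero, max_eq_right (f_ge s)] at c
      have c' : p s ≤ C * s * f s ^ ((q - 2) / q) := by
        have : p s * s ≤ (C * s * f s ^ ((q - 2) / q)) * s := by linarith
        exact le_of_mul_le_mul_right this hs.1
      have e : f s ^ ((q - 2) / q) * f s ^ (2 / q - 1) = 1 := by
        rw [← Real.rpow_add (fpos s)]
        have : (q - 2) / q + (2 / q - 1) = 0 := by field_simp; ring
        rw [this, Real.rpow_zero]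
      have := mul_le_mul_of_nonneg_right c' (Real.rpow_nonneg (fpos s).le (2 / q - 1))
      rw [mul_assoc (C * s), e, mul_one] at this
      have e2 : q * p s * (2 / q) * f s ^ (2 / q - 1) = 2 * (p s * f s ^ (2 / q - 1)) := by
        field_simp
      rw [e2]
      linarith
  have := hG (Set.left_mem_Icc.2 zero_le_one) (Set.right_mem_Icc.2 zero_le_one) zero_le_one
  simp only [G] at this
  norm_num at this
  linarith

/-! ### Kernel sums -/

section kernel
variable {n : Type*} [Fintype n] [DecidableEq n]

lemma holder_sum {q : ℝ} (hq : 2 ≤ q) (z b : n → ℝ) (hz : ∀ i, 0 ≤ z i) (hb : ∀ i, 0 ≤ b i) :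
    ∑ i, z i * b i ^ (q - 2) ≤
      (∑ i, z i ^ (q / 2)) ^ (2 / q) * (∑ i, b i ^ q) ^ ((q - 2) / q) := by
  rcases hq.eq_or_lt with rfl | hq
  · simp
  · have hc : (q / 2).HolderConjugate (q / (q - 2)) := by
      rw [Real.holderConjugate_iff]
      refine ⟨by linarith, ?_⟩
      have : q - 2 ≠ 0 := by linarith
      have : q ≠ 0 := by linarith
      field_simp
      ring
    have h := Real.inner_le_Lp_mul_Lq_of_nonneg Finset.univ hc (f := z)
      (g := fun i => b i ^ (q - 2)) (fun i _ => hz i) (fun i _ => Real.rpow_nonneg (hb i) _)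
    refine h.trans (le_of_eq ?_)
    rw [one_div_div, one_div_div]
    congr 3
    ext i
    rw [← Real.rpow_mul (hb i), mul_div_cancel₀ q (by linarith : q - 2 ≠ 0)]

lemma mul_conjTranspose_diag (M : Matrix n n ℂ) (i : n) :
    (M * M.conjTranspose) i i = ((∑ j, ‖M i j‖ ^ 2 : ℝ) : ℂ) := by
  rw [Matrix.mul_apply]
  push_cast
  refine Finset.sum_congr rfl fun j _ => ?_
  rw [Matrix.conjTranspose_apply, RCLike.star_def, Complex.mul_conj']

lemma conj_diagonal_diag (S : Matrix n n ℂ) (c : n → ℝ) (i : n) :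
    (S * Matrix.diagonal (fun a => (c a : ℂ)) * S.conjTranspose) i i
      = ((∑ a, ‖S i a‖ ^ 2 * c a : ℝ) : ℂ) := by
  rw [Matrix.mul_apply]
  push_cast
  refine Finset.sum_congr rfl fun j _ => ?_
  rw [Matrix.mul_diagonal, Matrix.conjTranspose_apply, RCLike.star_def, ← Complex.mul_conj']
  ring

lemma row_sum_one {S : Matrix n n ℂ} (hS : S * S.conjTranspose = 1) (i : n) :
    ∑ a, ‖S i a‖ ^ 2 = 1 := by
  have := mul_conjTranspose_diag S i
  rw [hS, Matrix.one_apply_eq] at this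
  exact_mod_cast this.symm

lemma col_sum_one {S : Matrix n n ℂ} (hS : S.conjTranspose * S = 1) (a : n) :
    ∑ i, ‖S i a‖ ^ 2 = 1 := by
  have := row_sum_one (S := S.conjTranspose) (by simpa using hS) a
  simpa using this

lemma row_sum_sdt {S T : Matrix n n ℂ} (hT : T * T.conjTranspose = 1) (c : n → ℝ) (i : n) :
    ∑ j, ‖(S * Matrix.diagonal (fun a => (c a : ℂ)) * T) i j‖ ^ 2 = ∑ a, ‖S i a‖ ^ 2 * c a ^ 2 := by
  have h1 := mul_conjTranspose_diag (S * Matrix.diagonal (fun a => (c a : ℂ)) * T) i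
  have h2 := conj_diagonal_diag S (fun a => c a ^ 2) i
  have e : (S * Matrix.diagonal (fun a => (c a : ℂ)) * T) *
      (S * Matrix.diagonal (fun a => (c a : ℂ)) * T).conjTranspose
      = S * Matrix.diagonal (fun a => ((c a ^ 2 : ℝ) : ℂ)) * S.conjTranspose := by
    rw [Matrix.conjTranspose_mul, Matrix.conjTranspose_mul, Matrix.diagonal_conjTranspose]
    have e1 : (star fun a => (c a : ℂ)) = fun a => (c a : ℂ) := by
      ext a; simp
    rw [e1]
    calc _ = S * (Matrix.diagonal (fun a => (c a : ℂ)) * (T * T.conjTranspose) *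
          Matrix.diagonal (fun a => (c a : ℂ))) * S.conjTranspose := by
            simp only [Matrix.mul_assoc]
      _ = _ := by
        rw [hT, Matrix.mul_one, Matrix.diagonal_mul_diagonal]
        congr 3
        ext a; push_cast; ring
  rw [e, h2] at h1
  exact_mod_cast h1.symm

lemma col_sum_sdt {S T : Matrix n n ℂ} (hS : S.conjTranspose * S = 1) (c : n → ℝ) (j : n) :
    ∑ i, ‖(S * Matrix.diagonal (fun a => (c a : ℂ)) * T) i j‖ ^ 2 = ∑ a, ‖T a j‖ ^ 2 * c a ^ 2 := by
  have := row_sum_sdt (S := T.conjTranspose) (T := S.conjTranspose) (by simpa using hS) c j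
  simp only [Matrix.conjTranspose_apply, norm_star] at this
  rw [← this]
  refine Finset.sum_congr rfl fun i _ => ?_
  rw [← norm_star (_ : ℂ), ← Matrix.conjTranspose_apply]
  rw [Matrix.conjTranspose_mul, Matrix.conjTranspose_mul, Matrix.diagonal_conjTranspose,
    ← Matrix.mul_assoc]
  have e1 : (star fun a => (c a : ℂ)) = fun a => (c a : ℂ) := by
    ext a; simp
  rw [e1]

/-- Jensen for a (sub-)doubly stochastic matrix. -/
lemma stoch_jensen {p : ℝ} (hp : 1 ≤ p) (P : n → n → ℝ) (hP : ∀ i j, 0 ≤ P i j)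
    (hr : ∀ i, ∑ j, P i j = 1) (hc : ∀ j, ∑ i, P i j = 1) (z : n → ℝ) (hz : ∀ j, 0 ≤ z j) :
    ∑ i, (∑ j, P i j * z j) ^ p ≤ ∑ j, z j ^ p := by
  calc ∑ i, (∑ j, P i j * z j) ^ p ≤ ∑ i, ∑ j, P i j * z j ^ p := by
        refine Finset.sum_le_sum fun i _ => ?_
        exact Real.rpow_arith_mean_le_arith_mean_rpow _ _ _ (fun j _ => hP i j) (hr i)
          (fun j _ => hz j) hp
    _ = ∑ j, (∑ i, P i j) * z j ^ p := by
        rw [Finset.sum_comm]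
        simp_rw [Finset.sum_mul]
    _ = _ := by simp [hc]

lemma sq_rpow_half {q : ℝ} (y : ℝ) : (y ^ 2) ^ (q / 2) = |y| ^ q := by
  rw [← sq_abs, ← Real.rpow_natCast, ← Real.rpow_mul (abs_nonneg y)]
  congr 1; push_cast; ring

lemma half_bound {q : ℝ} (hq : 2 ≤ q) {S : Matrix n n ℂ}
    (hS : S * S.conjTranspose = 1) (hS' : S.conjTranspose * S = 1) (y α : n → ℝ) :
    ∑ i, (∑ a, ‖S i a‖ ^ 2 * y a ^ 2) * |α i| ^ (q - 2) ≤
      (∑ a, |y a| ^ q) ^ (2 / q) * (∑ i, |α i| ^ q) ^ ((q - 2) / q) := by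
  refine (holder_sum hq _ _ (fun i => by positivity) (fun i => abs_nonneg (α i))).trans ?_
  apply mul_le_mul_of_nonneg_right _ (by positivity)
  apply Real.rpow_le_rpow (by positivity) _ (by positivity)
  have := stoch_jensen (p := q / 2) (by linarith) (fun i a => ‖S i a‖ ^ 2) (fun i a => by positivity)
    (row_sum_one hS) (col_sum_one hS') (fun a => y a ^ 2) (fun a => by positivity)
  simpa only [sq_rpow_half] using this

lemma resolvent_bound {S T : Matrix n n ℂ}
    (hS' : S.conjTranspose * S = 1) (hT : T * T.conjTranspose = 1)
    (y α β : n → ℝ) (hα : ∀ i, 0 ≤ α i) (hβ : ∀ i, 0 ≤ β i) {t : ℝ} (ht : 0 < t) :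
    ∑ a, y a ^ 2 * (t + (∑ i, ‖S i a‖ ^ 2 * α i + ∑ j, ‖T a j‖ ^ 2 * β j) / 2)⁻¹ ≤
    ∑ i, ∑ j, ‖(S * Matrix.diagonal (fun a => (y a : ℂ)) * T) i j‖ ^ 2 * (t + (α i + β j) / 2)⁻¹ := by
  set x : n → ℝ := fun a => (∑ i, ‖S i a‖ ^ 2 * α i + ∑ j, ‖T a j‖ ^ 2 * β j) / 2 with hx
  have hx0 : ∀ a, 0 ≤ x a := fun a =>
    div_nonneg (add_nonneg (Finset.sum_nonneg fun i _ => mul_nonneg (by positivity) (hα i))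
      (Finset.sum_nonneg fun i _ => mul_nonneg (by positivity) (hβ i))) (by norm_num)
  have hxt : ∀ a, 0 < t + x a := fun a => by linarith [hx0 a]
  set c : n → ℝ := fun a => y a * (t + x a)⁻¹ with hc
  set G := S * Matrix.diagonal (fun a => (y a : ℂ)) * T with hG
  set w := S * Matrix.diagonal (fun a => (c a : ℂ)) * T with hw
  set K := ∑ a, y a ^ 2 * (t + x a)⁻¹ with hK
  have hm : ∀ i j, 0 < t + (α i + β j) / 2 := fun i j => by linarith [hα i, hβ j]
  -- cross term
  have cross : ∑ i, ∑ j, (star (w i j) * G i j).re = K := by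
    have e : (w.conjTranspose * G).trace = ((K : ℝ) : ℂ) := by
      rw [hw, hG, Matrix.conjTranspose_mul, Matrix.conjTranspose_mul,
        Matrix.diagonal_conjTranspose]
      have e1 : (star fun a => (c a : ℂ)) = fun a => (c a : ℂ) := by
        ext a; simp
      rw [e1]
      calc _ = (T.conjTranspose * (Matrix.diagonal (fun a => (c a : ℂ)) *
            (S.conjTranspose * S) * Matrix.diagonal (fun a => (y a : ℂ)) * T)).trace := by
              simp only [Matrix.mul_assoc]
        _ = (Matrix.diagonal (fun a => (c a : ℂ)) * Matrix.diagonal (fun a => (y a : ℂ))).trace := by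
          rw [hS', Matrix.mul_one, Matrix.trace_mul_comm, Matrix.mul_assoc, hT, Matrix.mul_one]
        _ = _ := by
          rw [Matrix.diagonal_mul_diagonal, Matrix.trace_diagonal, hK]
          push_cast
          refine Finset.sum_congr rfl fun a _ => ?_
          simp only [hc]; push_cast; ring
    have e2 : (w.conjTranspose * G).trace = ∑ i, ∑ j, star (w i j) * G i j := by
      rw [Finset.sum_comm]
      rfl
    rw [e2] at e
    have := congrArg Complex.re e
    simpa only [Complex.re_sum, Complex.ofReal_re] using this
  have quad : ∑ i, ∑ j, ‖w i j‖ ^ 2 * (t + (α i + β j) / 2) = K := by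
    have r : ∑ i, ∑ j, ‖w i j‖ ^ 2 * α i = ∑ a, c a ^ 2 * ∑ i, ‖S i a‖ ^ 2 * α i := by
      simp_rw [← Finset.sum_mul, hw, row_sum_sdt hT, Finset.sum_mul, Finset.mul_sum]
      rw [Finset.sum_comm]
      refine Finset.sum_congr rfl fun a _ => Finset.sum_congr rfl fun i _ => by ring
    have l : ∑ i, ∑ j, ‖w i j‖ ^ 2 * β j = ∑ a, c a ^ 2 * ∑ j, ‖T a j‖ ^ 2 * β j := by
      rw [Finset.sum_comm]
      simp_rw [← Finset.sum_mul, hw, col_sum_sdt hS', Finset.sum_mul, Finset.mul_sum]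
      rw [Finset.sum_comm]
      refine Finset.sum_congr rfl fun a _ => Finset.sum_congr rfl fun i _ => by ring
    have o : ∑ i, ∑ j, ‖w i j‖ ^ 2 = ∑ a, c a ^ 2 := by
      simp_rw [hw, row_sum_sdt hT]
      rw [Finset.sum_comm]
      simp_rw [← Finset.sum_mul, col_sum_one hS', one_mul]
    calc _ = t * ∑ i, ∑ j, ‖w i j‖ ^ 2 + (∑ i, ∑ j, ‖w i j‖ ^ 2 * α i) / 2
          + (∑ i, ∑ j, ‖w i j‖ ^ 2 * β j) / 2 := by
          simp_rw [Finset.mul_sum, Finset.sum_div, ← Finset.sum_add_distrib]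
          refine Finset.sum_congr rfl fun a _ => Finset.sum_congr rfl fun i _ => by ring
      _ = ∑ a, c a ^ 2 * (t + x a) := by
          rw [r, l, o, Finset.mul_sum, Finset.sum_div, Finset.sum_div, ← Finset.sum_add_distrib,
            ← Finset.sum_add_distrib]
          refine Finset.sum_congr rfl fun a _ => ?_
          simp only [hx]; ring
      _ = K := by
          rw [hK]
          refine Finset.sum_congr rfl fun a _ => ?_
          simp only [hc]
          have := (hxt a).ne'
          field_simp
  have pt : ∀ i j, 2 * (star (w i j) * G i j).re ≤
      ‖G i j‖ ^ 2 * (t + (α i + β j) / 2)⁻¹ + ‖w i j‖ ^ 2 * (t + (α i + β j) / 2) := by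
    intro i j
    have h1 : (star (w i j) * G i j).re ≤ ‖w i j‖ * ‖G i j‖ := by
      refine (Complex.re_le_norm _).trans ?_
      rw [norm_mul, norm_star]
    set μ := t + (α i + β j) / 2
    have hμ : 0 < μ := hm i j
    have h2 : 0 ≤ (‖G i j‖ - ‖w i j‖ * μ) ^ 2 * μ⁻¹ := by positivity
    have h3 : (‖G i j‖ - ‖w i j‖ * μ) ^ 2 * μ⁻¹
      = ‖G i j‖ ^ 2 * μ⁻¹ + ‖w i j‖ ^ 2 * μ - 2 * (‖w i j‖ * ‖G i j‖) := by
      field_simp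
      ring
    linarith
  have := Finset.sum_le_sum fun i (_ : i ∈ Finset.univ) =>
    Finset.sum_le_sum fun j (_ : j ∈ Finset.univ) => pt i j
  simp_rw [Finset.sum_add_distrib, ← Finset.mul_sum] at this
  rw [cross, quad] at this
  linarith

lemma rpow_concave_bound {S T : Matrix n n ℂ}
    (hS' : S.conjTranspose * S = 1) (hT : T * T.conjTranspose = 1)
    (y α β : n → ℝ) (hα : ∀ i, 0 ≤ α i) (hβ : ∀ i, 0 ≤ β i) {r : ℝ} (h0 : 0 < r) (h1 : r < 1) :
    ∑ i, ∑ j, ‖(S * Matrix.diagonal (fun a => (y a : ℂ)) * T) i j‖ ^ 2 * ((α i + β j) / 2) ^ r ≤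
    ∑ a, y a ^ 2 * ((∑ i, ‖S i a‖ ^ 2 * α i + ∑ j, ‖T a j‖ ^ 2 * β j) / 2) ^ r := by
  obtain ⟨μ, hμ⟩ := Real.exists_measure_rpow_eq_integral_rpowIntegrand₀₁ (p := r) ⟨h0, h1⟩
  set x : n → ℝ := fun a => (∑ i, ‖S i a‖ ^ 2 * α i + ∑ j, ‖T a j‖ ^ 2 * β j) / 2 with hx
  have hx0 : ∀ a, 0 ≤ x a := fun a =>
    div_nonneg (add_nonneg (Finset.sum_nonneg fun i _ => mul_nonneg (by positivity) (hα i))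
      (Finset.sum_nonneg fun i _ => mul_nonneg (by positivity) (hβ i))) (by norm_num)
  have hm : ∀ i j, 0 ≤ (α i + β j) / 2 := fun i j => by linarith [hα i, hβ j]
  set G := S * Matrix.diagonal (fun a => (y a : ℂ)) * T with hG
  have o : ∑ i, ∑ j, ‖G i j‖ ^ 2 = ∑ a, y a ^ 2 := by
    simp_rw [hG, row_sum_sdt hT]
    rw [Finset.sum_comm]
    simp_rw [← Finset.sum_mul, col_sum_one hS', one_mul]
  have L : ∑ i, ∑ j, ‖G i j‖ ^ 2 * ((α i + β j) / 2) ^ r = ∫ t in Set.Ioi 0,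
      ∑ i, ∑ j, ‖G i j‖ ^ 2 * Real.rpowIntegrand₀₁ r t ((α i + β j) / 2) ∂μ := by
    rw [MeasureTheory.integral_finsetSum]
    · refine Finset.sum_congr rfl fun i _ => ?_
      rw [MeasureTheory.integral_finsetSum]
      · refine Finset.sum_congr rfl fun j _ => ?_
        rw [MeasureTheory.integral_const_mul, ← (hμ _ (hm i j)).2]
      · intro j _
        exact (hμ _ (hm i j)).1.const_mul _
    · intro i _
      refine MeasureTheory.integrable_finsetSum _ fun j _ => ?_
      exact (hμ _ (hm i j)).1.const_mul _
  have R : ∑ a, y a ^ 2 * x a ^ r = ∫ t in Set.Ioi 0,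
      ∑ a, y a ^ 2 * Real.rpowIntegrand₀₁ r t (x a) ∂μ := by
    rw [MeasureTheory.integral_finsetSum]
    · refine Finset.sum_congr rfl fun a _ => ?_
      rw [MeasureTheory.integral_const_mul, ← (hμ _ (hx0 a)).2]
    · intro a _
      exact (hμ _ (hx0 a)).1.const_mul _
  rw [L, R]
  apply MeasureTheory.setIntegral_mono_on
  · refine MeasureTheory.integrable_finsetSum _ fun i _ => ?_
    refine MeasureTheory.integrable_finsetSum _ fun j _ => ?_
    exact (hμ _ (hm i j)).1.const_mul _
  · refine MeasureTheory.integrable_finsetSum _ fun a _ => ?_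
    exact (hμ _ (hx0 a)).1.const_mul _
  · exact measurableSet_Ioi
  · intro t ht
    have ht : 0 < t := ht
    have key := resolvent_bound hS' hT y α β hα hβ ht
    unfold Real.rpowIntegrand₀₁
    have e1 : ∑ i, ∑ j, ‖G i j‖ ^ 2 * (t ^ r * (t⁻¹ - (t + (α i + β j) / 2)⁻¹)) =
        t ^ r * (t⁻¹ * ∑ i, ∑ j, ‖G i j‖ ^ 2 - ∑ i, ∑ j, ‖G i j‖ ^ 2 * (t + (α i + β j) / 2)⁻¹) := by
      simp_rw [mul_sub, Finset.mul_sum, ← Finset.sum_sub_distrib]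
      refine Finset.sum_congr rfl fun a _ => Finset.sum_congr rfl fun i _ => by ring
    have e2 : ∑ a, y a ^ 2 * (t ^ r * (t⁻¹ - (t + x a)⁻¹)) =
        t ^ r * (t⁻¹ * ∑ a, y a ^ 2 - ∑ a, y a ^ 2 * (t + x a)⁻¹) := by
      simp_rw [mul_sub, Finset.mul_sum, ← Finset.sum_sub_distrib]
      refine Finset.sum_congr rfl fun a _ => by ring
    rw [e1, e2, o]
    apply mul_le_mul_of_nonneg_left _ (Real.rpow_nonneg ht.le r)
    exact sub_le_sub_left key _

lemma kernel_bound {q : ℝ} (hq : 2 ≤ q) {S T : Matrix n n ℂ}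
    (hS : S * S.conjTranspose = 1) (hS' : S.conjTranspose * S = 1)
    (hT : T * T.conjTranspose = 1) (hT' : T.conjTranspose * T = 1) (y α β : n → ℝ) :
    ∑ i, ∑ j, ‖(S * Matrix.diagonal (fun a => (y a : ℂ)) * T) i j‖ ^ 2 * Kker q (α i) (β j) ≤
      (∑ a, |y a| ^ q) ^ (2 / q) * (max (∑ i, |α i| ^ q) (∑ j, |β j| ^ q)) ^ ((q - 2) / q) := by
  have hr : 0 ≤ (q - 2) / q := div_nonneg (by linarith) (by linarith)
  have bα : (∑ i, |α i| ^ q) ^ ((q - 2) / q) ≤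
      (max (∑ i, |α i| ^ q) (∑ j, |β j| ^ q)) ^ ((q - 2) / q) :=
    Real.rpow_le_rpow (by positivity) (le_max_left _ _) hr
  have bβ : (∑ i, |β i| ^ q) ^ ((q - 2) / q) ≤
      (max (∑ i, |α i| ^ q) (∑ j, |β j| ^ q)) ^ ((q - 2) / q) :=
    Real.rpow_le_rpow (by positivity) (le_max_right _ _) hr
  have hY : 0 ≤ (∑ a, |y a| ^ q) ^ (2 / q) := by positivity
  unfold Kker
  split_ifs with h3
  · have a1 := (half_bound hq hS hS' y α).trans (mul_le_mul_of_nonneg_left bα hY)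
    have a2 := (half_bound hq (S := T.conjTranspose) (by simpa using hT') (by simpa using hT)
      y β).trans (mul_le_mul_of_nonneg_left bβ hY)
    set G := S * Matrix.diagonal (fun a => (y a : ℂ)) * T with hG
    have e1 : ∑ i, ∑ j, ‖G i j‖ ^ 2 * |α i| ^ (q - 2) =
        ∑ i, (∑ a, ‖S i a‖ ^ 2 * y a ^ 2) * |α i| ^ (q - 2) := by
      simp_rw [← Finset.sum_mul, hG, row_sum_sdt hT]
    have e2 : ∑ i, ∑ j, ‖G i j‖ ^ 2 * |β j| ^ (q - 2) =
        ∑ i, (∑ a, ‖T.conjTranspose i a‖ ^ 2 * y a ^ 2) * |β i| ^ (q - 2) := by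
      rw [Finset.sum_comm]
      simp_rw [← Finset.sum_mul, hG, col_sum_sdt hS', Matrix.conjTranspose_apply, norm_star]
    have e3 : ∑ i, ∑ j, ‖G i j‖ ^ 2 * ((|α i| ^ (q - 2) + |β j| ^ (q - 2)) / 2) =
        (∑ i, ∑ j, ‖G i j‖ ^ 2 * |α i| ^ (q - 2)) / 2
        + (∑ i, ∑ j, ‖G i j‖ ^ 2 * |β j| ^ (q - 2)) / 2 := by
      simp_rw [Finset.sum_div, ← Finset.sum_add_distrib]
      refine Finset.sum_congr rfl fun a _ => Finset.sum_congr rfl fun i _ => by ring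
    rw [e3, e1, e2]
    linarith
  · set x : n → ℝ := fun a => (∑ i, ‖S i a‖ ^ 2 * |α i| + ∑ j, ‖T a j‖ ^ 2 * |β j|) / 2 with hx
    have hx0 : ∀ a, 0 ≤ x a := fun a => by positivity
    have main : ∑ i, ∑ j, ‖(S * Matrix.diagonal (fun a => (y a : ℂ)) * T) i j‖ ^ 2 *
        ((|α i| + |β j|) / 2) ^ (q - 2) ≤ ∑ a, y a ^ 2 * x a ^ (q - 2) := by
      rcases hq.eq_or_lt with rfl | hq
      · simp only [sub_self, Real.rpow_zero, mul_one]
        simp_rw [row_sum_sdt hT]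
        rw [Finset.sum_comm]
        simp_rw [← Finset.sum_mul, col_sum_one hS', one_mul]
        rfl
      · exact rpow_concave_bound hS' hT y (fun i => |α i|) (fun j => |β j|)
          (fun i => abs_nonneg _) (fun i => abs_nonneg _) (by linarith) (by linarith)
    refine main.trans ((holder_sum hq _ _ (fun a => by positivity) hx0).trans ?_)
    simp_rw [sq_rpow_half]
    apply mul_le_mul_of_nonneg_left _ hY
    apply Real.rpow_le_rpow (Finset.sum_nonneg fun a _ => Real.rpow_nonneg (hx0 a) _) _ hr
    have jS := stoch_jensen (p := q) (by linarith) (fun a i => ‖S i a‖ ^ 2)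
      (fun i a => by positivity) (col_sum_one hS') (row_sum_one hS) (fun i => |α i|)
      (fun a => by positivity)
    have jT := stoch_jensen (p := q) (by linarith) (fun a i => ‖T a i‖ ^ 2)
      (fun i a => by positivity) (row_sum_one hT) (col_sum_one hT') (fun i => |β i|)
      (fun a => by positivity)
    have jj : ∑ a, x a ^ q ≤ ∑ a, ((∑ i, ‖S i a‖ ^ 2 * |α i|) ^ q / 2
        + (∑ j, ‖T a j‖ ^ 2 * |β j|) ^ q / 2) := by
      refine Finset.sum_le_sum fun a _ => ?_
      have := (convexOn_rpow (show 1 ≤ q by linarith)).2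
        (show (∑ i, ‖S i a‖ ^ 2 * |α i|) ∈ Set.Ici 0 from Set.mem_Ici.2 (by positivity))
        (show (∑ j, ‖T a j‖ ^ 2 * |β j|) ∈ Set.Ici 0 from Set.mem_Ici.2 (by positivity))
        (show (0:ℝ) ≤ 1 / 2 by norm_num) (show (0:ℝ) ≤ 1 / 2 by norm_num) (by norm_num)
      simp only [smul_eq_mul] at this
      have e : x a = 1 / 2 * (∑ i, ‖S i a‖ ^ 2 * |α i|) + 1 / 2 * (∑ j, ‖T a j‖ ^ 2 * |β j|) := by
        simp only [hx]; ring
      rw [e]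
      linarith
    rw [Finset.sum_add_distrib, ← Finset.sum_div, ← Finset.sum_div] at jj
    have m1 := le_max_left (∑ i, |α i| ^ q) (∑ j, |β j| ^ q)
    have m2 := le_max_right (∑ i, |α i| ^ q) (∑ j, |β j| ^ q)
    linarith

end kernel

/-! ### Hermitian matrices -/

section herm
variable {n : Type*} [Fintype n] [DecidableEq n]

noncomputable def hU {A : Matrix n n ℂ} (hA : A.IsHermitian) : Matrix n n ℂ :=
  (hA.eigenvectorUnitary : Matrix n n ℂ)

lemma hU_mul {A : Matrix n n ℂ} (hA : A.IsHermitian) : hU hA * (hU hA).conjTranspose = 1 :=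
  Unitary.mul_star_self_of_mem hA.eigenvectorUnitary.2

lemma hU_mul' {A : Matrix n n ℂ} (hA : A.IsHermitian) : (hU hA).conjTranspose * hU hA = 1 :=
  Unitary.star_mul_self_of_mem hA.eigenvectorUnitary.2

/-- functional calculus -/
noncomputable def fcal {A : Matrix n n ℂ} (hA : A.IsHermitian) (g : ℝ → ℝ) : Matrix n n ℂ :=
  hU hA * Matrix.diagonal (fun i => ((g (hA.eigenvalues i) : ℝ) : ℂ)) * (hU hA).conjTranspose

lemma fcal_id {A : Matrix n n ℂ} (hA : A.IsHermitian) : fcal hA (fun x => x) = A :=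
  (hA.spectral_theorem).symm

lemma unitary_pair {U V : Matrix n n ℂ} (hU1 : U * U.conjTranspose = 1)
    (hV : V.conjTranspose * V = 1) :
    (U.conjTranspose * V).conjTranspose * (U.conjTranspose * V) = 1 := by
  rw [Matrix.conjTranspose_mul, Matrix.conjTranspose_conjTranspose]
  calc _ = V.conjTranspose * (U * U.conjTranspose) * V := by simp only [Matrix.mul_assoc]
    _ = 1 := by rw [hU1, Matrix.mul_one, hV]

lemma unitary_pair' {U V : Matrix n n ℂ} (hU1 : U.conjTranspose * U = 1)
    (hV : V * V.conjTranspose = 1) :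
    (U.conjTranspose * V) * (U.conjTranspose * V).conjTranspose = 1 := by
  rw [Matrix.conjTranspose_mul, Matrix.conjTranspose_conjTranspose]
  calc _ = U.conjTranspose * (V * V.conjTranspose) * U := by simp only [Matrix.mul_assoc]
    _ = 1 := by rw [hV, Matrix.mul_one, hU1]

/-- overlap weights -/
noncomputable def ovl {A B : Matrix n n ℂ} (hA : A.IsHermitian) (hB : B.IsHermitian) (i j : n) : ℝ :=
  ‖((hU hA).conjTranspose * hU hB) i j‖ ^ 2

lemma ovl_row {A B : Matrix n n ℂ} (hA : A.IsHermitian) (hB : B.IsHermitian) (i : n) :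
    ∑ j, ovl hA hB i j = 1 := row_sum_one (unitary_pair' (hU_mul' hA) (hU_mul hB)) i

lemma ovl_col {A B : Matrix n n ℂ} (hA : A.IsHermitian) (hB : B.IsHermitian) (j : n) :
    ∑ i, ovl hA hB i j = 1 := col_sum_one (unitary_pair (hU_mul hA) (hU_mul' hB)) j

lemma trace_pair {A B : Matrix n n ℂ} (hA : A.IsHermitian) (hB : B.IsHermitian) (g k : ℝ → ℝ) :
    (fcal hA g * fcal hB k).trace.re =
      ∑ i, ∑ j, ovl hA hB i j * (g (hA.eigenvalues i) * k (hB.eigenvalues j)) := by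
  set M := (hU hA).conjTranspose * hU hB with hM
  have : (fcal hA g * fcal hB k).trace =
      (Matrix.diagonal (fun i => ((g (hA.eigenvalues i) : ℝ) : ℂ)) *
        (M * Matrix.diagonal (fun i => ((k (hB.eigenvalues i) : ℝ) : ℂ)) * M.conjTranspose)).trace := by
    unfold fcal
    rw [hM, Matrix.conjTranspose_mul, Matrix.conjTranspose_conjTranspose]
    simp only [Matrix.mul_assoc]
    rw [Matrix.trace_mul_comm]
    simp only [Matrix.mul_assoc]
  rw [this, Matrix.trace, Complex.re_sum]
  refine Finset.sum_congr rfl fun i _ => ?_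
  rw [Matrix.diag_apply, Matrix.diagonal_mul, conj_diagonal_diag, ← Complex.ofReal_mul,
    Complex.ofReal_re, Finset.mul_sum]
  refine Finset.sum_congr rfl fun j _ => ?_
  unfold ovl
  ring

lemma trace_self {A : Matrix n n ℂ} (hA : A.IsHermitian) (g k : ℝ → ℝ) :
    (fcal hA g * fcal hA k).trace.re = ∑ i, g (hA.eigenvalues i) * k (hA.eigenvalues i) := by
  rw [trace_pair]
  refine Finset.sum_congr rfl fun i _ => ?_
  have : ∀ j, ovl hA hA i j = if i = j then 1 else 0 := by
    intro j
    unfold ovl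
    rw [hU_mul', Matrix.one_apply]
    split_ifs <;> simp
  simp [this]

noncomputable def trq {A : Matrix n n ℂ} (q : ℝ) (hA : A.IsHermitian) : ℝ :=
  ∑ i, |hA.eigenvalues i| ^ q

lemma klein {A B : Matrix n n ℂ} (hA : A.IsHermitian) (hB : B.IsHermitian) {q : ℝ} (hq : 2 ≤ q) :
    trq q hB + q * (fcal hB (hpow q) * (A - B)).trace.re ≤ trq q hA := by
  have e1 : (fcal hB (hpow q) * A).trace.re =
      ∑ i, ∑ j, ovl hB hA i j * (hpow q (hB.eigenvalues i) * hA.eigenvalues j) := by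
    conv_lhs => rw [← fcal_id hA]
    exact trace_pair hB hA _ _
  have e2 : (fcal hB (hpow q) * B).trace.re = ∑ i, ∑ j, ovl hB hA i j *
      (hpow q (hB.eigenvalues i) * hB.eigenvalues i) := by
    simp_rw [← Finset.sum_mul, ovl_row, one_mul]
    conv_lhs => arg 1; arg 1; arg 2; rw [← fcal_id hB]
    exact trace_self hB _ _
  have e3 : trq q hB = ∑ i, ∑ j, ovl hB hA i j * |hB.eigenvalues i| ^ q := by
    simp_rw [← Finset.sum_mul, ovl_row, one_mul]; rfl
  have e4 : trq q hA = ∑ i, ∑ j, ovl hB hA i j * |hA.eigenvalues j| ^ q := by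
    rw [Finset.sum_comm]
    simp_rw [← Finset.sum_mul, ovl_col, one_mul]; rfl
  rw [Matrix.mul_sub, Matrix.trace_sub, Complex.sub_re, e1, e2, e3, e4]
  simp_rw [← Finset.sum_sub_distrib, Finset.mul_sum, ← Finset.sum_add_distrib]
  refine Finset.sum_le_sum fun i _ => Finset.sum_le_sum fun j _ => ?_
  have := mul_le_mul_of_nonneg_left (klein_scalar hq (hA.eigenvalues j) (hB.eigenvalues i))
    (show 0 ≤ ovl hB hA i j by unfold ovl; positivity)
  linarith

lemma mono_bound {A B Y : Matrix n n ℂ} (hA : A.IsHermitian) (hB : B.IsHermitian)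
    (hY : Y.IsHermitian) {q τ : ℝ} (hq : 2 ≤ q) (h : A - B = (τ : ℂ) • Y) :
    ((fcal hA (hpow q) - fcal hB (hpow q)) * (A - B)).trace.re ≤
      (q - 1) * trq q hY ^ (2 / q) * τ ^ 2 * (max (trq q hB) (trq q hA)) ^ ((q - 2) / q) := by
  have e1 : (fcal hA (hpow q) * B).trace.re =
      ∑ i, ∑ j, ovl hA hB i j * (hpow q (hA.eigenvalues i) * hB.eigenvalues j) := by
    conv_lhs => rw [← fcal_id hB]
    exact trace_pair hA hB _ _
  have e2 : (fcal hB (hpow q) * A).trace.re =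
      ∑ i, ∑ j, ovl hA hB i j * (hA.eigenvalues i * hpow q (hB.eigenvalues j)) := by
    rw [Matrix.trace_mul_comm]
    conv_lhs => rw [← fcal_id hA]
    exact trace_pair hA hB _ _
  have e3 : (fcal hA (hpow q) * A).trace.re = ∑ i, ∑ j, ovl hA hB i j *
      (hpow q (hA.eigenvalues i) * hA.eigenvalues i) := by
    simp_rw [← Finset.sum_mul, ovl_row, one_mul]
    conv_lhs => arg 1; arg 1; arg 2; rw [← fcal_id hA]
    exact trace_self hA _ _
  have e4 : (fcal hB (hpow q) * B).trace.re = ∑ i, ∑ j, ovl hA hB i j *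
      (hpow q (hB.eigenvalues j) * hB.eigenvalues j) := by
    rw [Finset.sum_comm]
    simp_rw [← Finset.sum_mul, ovl_col, one_mul]
    conv_lhs => arg 1; arg 1; arg 2; rw [← fcal_id hB]
    exact trace_self hB _ _
  have e5 : ((fcal hA (hpow q) - fcal hB (hpow q)) * (A - B)).trace.re =
      ∑ i, ∑ j, ovl hA hB i j * ((hpow q (hA.eigenvalues i) - hpow q (hB.eigenvalues j)) *
        (hA.eigenvalues i - hB.eigenvalues j)) := by
    rw [Matrix.sub_mul, Matrix.mul_sub, Matrix.mul_sub]
    simp only [Matrix.trace_sub, Complex.sub_re, e1, e2, e3, e4]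
    simp_rw [← Finset.sum_sub_distrib]
    refine Finset.sum_congr rfl fun i _ => Finset.sum_congr rfl fun j _ => by ring
  set U := hU hA with hUA
  set V := hU hB with hVB
  set W := hU hY with hWY
  have e6 : (U.conjTranspose * W) * Matrix.diagonal
      (fun a => ((τ * hY.eigenvalues a : ℝ) : ℂ)) * (W.conjTranspose * V)
      = U.conjTranspose * (A - B) * V := by
    rw [h]
    conv_rhs => rw [← fcal_id hY]
    have : Matrix.diagonal (fun a => ((τ * hY.eigenvalues a : ℝ) : ℂ)) =
        (τ : ℂ) • Matrix.diagonal (fun a => ((hY.eigenvalues a : ℝ) : ℂ)) := by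
      rw [← Matrix.diagonal_smul]
      congr 1
      ext a; simp
    rw [this]
    unfold fcal
    simp only [Matrix.mul_smul, Matrix.smul_mul, Matrix.mul_assoc, hWY]
  have e7 : ∀ i j, ‖(U.conjTranspose * (A - B) * V) i j‖ ^ 2 =
      ovl hA hB i j * (hA.eigenvalues i - hB.eigenvalues j) ^ 2 := by
    intro i j
    have : U.conjTranspose * (A - B) * V =
        Matrix.diagonal (fun i => ((hA.eigenvalues i : ℝ) : ℂ)) * (U.conjTranspose * V)
        - (U.conjTranspose * V) * Matrix.diagonal (fun i => ((hB.eigenvalues i : ℝ) : ℂ)) := by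
      have a1 : U.conjTranspose * A =
          Matrix.diagonal (fun i => ((hA.eigenvalues i : ℝ) : ℂ)) * U.conjTranspose := by
        conv_lhs => rw [← fcal_id hA]
        unfold fcal
        rw [← hUA, ← Matrix.mul_assoc, ← Matrix.mul_assoc, hU_mul', Matrix.one_mul]
      have a2 : B * V =
          V * Matrix.diagonal (fun i => ((hB.eigenvalues i : ℝ) : ℂ)) := by
        conv_lhs => rw [← fcal_id hB]
        unfold fcal
        rw [← hVB, Matrix.mul_assoc, hU_mul', Matrix.mul_one]
      rw [Matrix.mul_sub, Matrix.sub_mul, a1, Matrix.mul_assoc, Matrix.mul_assoc, a2,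
        ← Matrix.mul_assoc U.conjTranspose]
    rw [this, Matrix.sub_apply, Matrix.diagonal_mul, Matrix.mul_diagonal]
    have e : ((hA.eigenvalues i : ℝ) : ℂ) * (U.conjTranspose * V) i j -
        (U.conjTranspose * V) i j * ((hB.eigenvalues j : ℝ) : ℂ) =
        (U.conjTranspose * V) i j * ((hA.eigenvalues i - hB.eigenvalues j : ℝ) : ℂ) := by
      push_cast; ring
    rw [e, norm_mul, mul_pow, Complex.norm_real, Real.norm_eq_abs, sq_abs]
    rfl
  have hk := kernel_bound hq (unitary_pair' (hU_mul' hA) (hU_mul hY))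
    (unitary_pair (hU_mul hA) (hU_mul' hY)) (unitary_pair' (hU_mul' hY) (hU_mul hB))
    (unitary_pair (hU_mul hY) (hU_mul' hB)) (fun a => τ * hY.eigenvalues a)
    hA.eigenvalues hB.eigenvalues
  rw [e6] at hk
  have e8 : (∑ a, |τ * hY.eigenvalues a| ^ q) ^ (2 / q) = τ ^ 2 * trq q hY ^ (2 / q) := by
    simp_rw [abs_mul, Real.mul_rpow (abs_nonneg _) (abs_nonneg _), ← Finset.mul_sum]
    rw [Real.mul_rpow (by positivity) (by positivity), ← Real.rpow_mul (abs_nonneg _),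
      mul_div_cancel₀ 2 (by linarith : q ≠ 0)]
    congr 1
    rw [show (2 : ℝ) = ((2 : ℕ) : ℝ) by norm_num, Real.rpow_natCast, sq_abs]
  rw [e8] at hk
  rw [e5]
  calc _ ≤ ∑ i, ∑ j, (q - 1) * (‖(U.conjTranspose * (A - B) * V) i j‖ ^ 2 *
        Kker q (hA.eigenvalues i) (hB.eigenvalues j)) := by
        refine Finset.sum_le_sum fun i _ => Finset.sum_le_sum fun j _ => ?_
        rw [e7]
        have := mul_le_mul_of_nonneg_left (hpow_diff hq (hA.eigenvalues i) (hB.eigenvalues j))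
          (show 0 ≤ ovl hA hB i j by unfold ovl; positivity)
        linarith
    _ = (q - 1) * ∑ i, ∑ j, (‖(U.conjTranspose * (A - B) * V) i j‖ ^ 2 *
        Kker q (hA.eigenvalues i) (hB.eigenvalues j)) := by
        simp_rw [← Finset.mul_sum]
    _ ≤ (q - 1) * _ := mul_le_mul_of_nonneg_left hk (by linarith)
    _ = _ := by
      rw [max_comm]
      unfold trq
      ring

lemma trq_nonneg {A : Matrix n n ℂ} (q : ℝ) (hA : A.IsHermitian) : 0 ≤ trq q hA := by
  unfold trq; positivity

lemma eq_zero_of_trq {A : Matrix n n ℂ} {q : ℝ} (hq : 2 ≤ q) (hA : A.IsHermitian)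
    (h : trq q hA = 0) : A = 0 := by
  rw [← hA.eigenvalues_eq_zero_iff]
  ext i
  have := (Finset.sum_eq_zero_iff_of_nonneg (fun i _ => by positivity)).1 h i (Finset.mem_univ i)
  rw [Real.rpow_eq_zero (abs_nonneg _) (by linarith)] at this
  simpa using this

theorem herm_smooth {X Y XY : Matrix n n ℂ} (hX : X.IsHermitian) (hY : Y.IsHermitian)
    (hXY : XY.IsHermitian) (hadd : XY = X + Y)
    {q : ℝ} (hq : 2 ≤ q) (horth : (fcal hX (hpow q) * Y).trace = 0) :
    trq q hXY ^ (2 / q) ≤ trq q hX ^ (2 / q) + (q - 1) * trq q hY ^ (2 / q) := by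
  have hYn : 0 ≤ trq q hY ^ (2 / q) := Real.rpow_nonneg (trq_nonneg _ _) _
  rcases (trq_nonneg q hX).eq_or_lt with h0 | h0
  · have : X = 0 := eq_zero_of_trq hq hX h0.symm
    have : XY = Y := by rw [hadd, this, zero_add]
    subst this
    have : 0 ≤ trq q hX ^ (2 / q) := Real.rpow_nonneg (trq_nonneg _ _) _
    nlinarith
  · have hH : ∀ t : ℝ, (X + (t : ℂ) • Y).IsHermitian := by
      intro t
      apply hX.add
      rw [Matrix.IsHermitian, Matrix.conjTranspose_smul, hY]
      simp
    have hAt : ∀ s t : ℝ, (X + (t : ℂ) • Y) - (X + (s : ℂ) • Y) = ((t - s : ℝ) : ℂ) • Y := by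
      intro s t
      push_cast
      rw [sub_smul]; abel
    have cong : ∀ {A B : Matrix n n ℂ} (hA : A.IsHermitian) (hB : B.IsHermitian), A = B →
        trq q hA = trq q hB := by
      intro A B hA hB h; subst h; rfl
    have cong2 : ∀ {A B : Matrix n n ℂ} (hA : A.IsHermitian) (hB : B.IsHermitian), A = B →
        fcal hA (hpow q) = fcal hB (hpow q) := by
      intro A B hA hB h; subst h; rfl
    have key := ode_bound (f := fun t => trq q (hH t))
      (p := fun t => (fcal (hH t) (hpow q) * Y).trace.re) (q := q)
      (C := (q - 1) * trq q hY ^ (2 / q)) hq (mul_nonneg (by linarith) hYn) ?_ ?_ ?_ ?_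
    · have a0 : trq q (hH 0) = trq q hX := cong _ _ (by simp)
      have a1 : trq q (hH 1) = trq q hXY := cong _ _ (by simp [hadd])
      rw [a0, a1] at key
      exact key
    · intro s t
      have := klein (hH t) (hH s) hq
      rw [hAt, Matrix.mul_smul, Matrix.trace_smul, smul_eq_mul, Complex.re_ofReal_mul] at this
      exact this
    · intro s t
      have := mono_bound (hH t) (hH s) hY hq (hAt s t)
      rw [hAt, Matrix.mul_smul, Matrix.trace_smul, smul_eq_mul, Complex.re_ofReal_mul,
        Matrix.sub_mul, Matrix.trace_sub, Complex.sub_re] at this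
      linarith
    · have := cong2 (hH 0) hX (by simp)
      simp only [this, horth, Complex.zero_re]
    · have a0 : trq q (hH 0) = trq q hX := cong _ _ (by simp)
      simpa only [a0] using h0

lemma fcal_commute {A C : Matrix n n ℂ} (hA : A.IsHermitian) (g : ℝ → ℝ) (h : A * C = C * A) :
    fcal hA g * C = C * fcal hA g := by
  set U := hU hA with hUA
  have u1 := hU_mul hA
  have u2 := hU_mul' hA
  rw [← hUA] at u1 u2
  set D := Matrix.diagonal (fun i => ((hA.eigenvalues i : ℝ) : ℂ)) with hD
  set E := Matrix.diagonal (fun i => ((g (hA.eigenvalues i) : ℝ) : ℂ)) with hE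
  have hAe : A = U * D * U.conjTranspose := (fcal_id hA).symm
  set C' := U.conjTranspose * C * U with hC'
  have h1 : D * C' = C' * D := by
    have l : U.conjTranspose * (A * C) * U = D * C' := by
      rw [hAe]
      calc _ = (U.conjTranspose * U) * (D * (U.conjTranspose * C * U)) := by
            simp only [Matrix.mul_assoc]
        _ = _ := by rw [u2, Matrix.one_mul]
    have r : U.conjTranspose * (C * A) * U = C' * D := by
      rw [hAe]
      calc _ = (U.conjTranspose * C * U) * D * (U.conjTranspose * U) := by
            simp only [Matrix.mul_assoc]
        _ = _ := by rw [u2, Matrix.mul_one]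
    rw [← l, ← r, h]
  have h2 : E * C' = C' * E := by
    ext i j
    have := congrFun (congrFun h1 i) j
    rw [hD, Matrix.diagonal_mul, Matrix.mul_diagonal] at this
    rw [hE, Matrix.diagonal_mul, Matrix.mul_diagonal]
    by_cases hij : hA.eigenvalues i = hA.eigenvalues j
    · rw [hij, mul_comm]
    · have : (((hA.eigenvalues i : ℝ) : ℂ) - ((hA.eigenvalues j : ℝ) : ℂ)) * C' i j = 0 := by
        rw [sub_mul, this]; ring
      rcases mul_eq_zero.1 this with h | h
      · exact absurd (by exact_mod_cast sub_eq_zero.1 h) hij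
      · rw [h]; ring
  have hC : C = U * C' * U.conjTranspose := by
    rw [hC']
    calc C = (U * U.conjTranspose) * C * (U * U.conjTranspose) := by
          rw [u1, Matrix.one_mul, Matrix.mul_one]
      _ = _ := by simp only [Matrix.mul_assoc]
  have hF : fcal hA g = U * E * U.conjTranspose := rfl
  calc fcal hA g * C = U * (E * ((U.conjTranspose * U) * C')) * U.conjTranspose := by
        rw [hF]; conv_lhs => rw [hC]
        simp only [Matrix.mul_assoc]
    _ = U * (C' * ((U.conjTranspose * U) * E)) * U.conjTranspose := by
        rw [u2, Matrix.one_mul, Matrix.one_mul, h2]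
    _ = _ := by
        rw [hF]; conv_rhs => rw [hC]
        simp only [Matrix.mul_assoc]

end herm

/-! ### Schatten norms and the Hermitian dilation -/

section schatten
variable {n : Type*} [Fintype n] [DecidableEq n]

/-- The trace `Tr (AᴴA)^{q/2}`. -/
noncomputable def schSum (q : ℝ) (A : Matrix n n ℂ) : ℝ :=
  ∑ i, ((Matrix.isHermitian_conjTranspose_mul_self A).eigenvalues i) ^ (q / 2)

noncomputable def rootSum (q : ℝ) (B : Matrix n n ℂ) : ℝ :=
  (B.charpoly.roots.map (fun z => z.re ^ (q / 2))).sum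

lemma rootSum_herm (q : ℝ) {B : Matrix n n ℂ} (hB : B.IsHermitian) :
    rootSum q B = ∑ i, (hB.eigenvalues i) ^ (q / 2) := by
  unfold rootSum
  rw [hB.roots_charpoly_eq_eigenvalues, Multiset.map_map]
  rfl

lemma schSum_eq (q : ℝ) (A : Matrix n n ℂ) : schSum q A = rootSum q (A.conjTranspose * A) :=
  (rootSum_herm q _).symm

open scoped ComplexOrder in
lemma eig_nonneg (A : Matrix n n ℂ) (i : n) :
    0 ≤ (Matrix.isHermitian_conjTranspose_mul_self A).eigenvalues i :=
  (Matrix.posSemidef_conjTranspose_mul_self A).eigenvalues_nonneg i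

lemma roots_prod_linear (d : n → ℂ) :
    (∏ i, (Polynomial.X - Polynomial.C (d i))).roots = Finset.univ.val.map d := by
  rw [Finset.prod_eq_multiset_prod]
  have := Polynomial.roots_multiset_prod_X_sub_C (Finset.univ.val.map d)
  rwa [Multiset.map_map] at this

lemma schSum_nonneg (q : ℝ) (A : Matrix n n ℂ) : 0 ≤ schSum q A :=
  Finset.sum_nonneg fun i _ =>
    Real.rpow_nonneg (eig_nonneg A i) _

lemma trq_eq_schSum (q : ℝ) {A : Matrix n n ℂ} (hA : A.IsHermitian) : trq q hA = schSum q A := by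
  rw [schSum_eq]
  have e : A.conjTranspose * A = hU hA * Matrix.diagonal
      (fun i => ((hA.eigenvalues i ^ 2 : ℝ) : ℂ)) * (hU hA).conjTranspose := by
    rw [hA]
    conv_lhs => rw [← fcal_id hA]
    unfold fcal
    calc _ = hU hA * (Matrix.diagonal (fun i => ((hA.eigenvalues i : ℝ) : ℂ)) *
          ((hU hA).conjTranspose * hU hA) * Matrix.diagonal
          (fun i => ((hA.eigenvalues i : ℝ) : ℂ))) * (hU hA).conjTranspose := by
          simp only [Matrix.mul_assoc]
      _ = _ := by
        rw [hU_mul', Matrix.mul_one, Matrix.diagonal_mul_diagonal]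
        congr 3
        ext i; push_cast; ring
  unfold rootSum
  rw [e, Matrix.charpoly_mul_comm, ← Matrix.mul_assoc, hU_mul', Matrix.one_mul,
    Matrix.charpoly_diagonal, roots_prod_linear, Multiset.map_map]
  unfold trq
  simp_rw [← sq_rpow_half]
  rfl

/-- Hermitian dilation -/
def dil (A : Matrix n n ℂ) : Matrix (n ⊕ n) (n ⊕ n) ℂ := Matrix.fromBlocks 0 A A.conjTranspose 0

lemma dil_herm (A : Matrix n n ℂ) : (dil A).IsHermitian := by
  unfold dil
  rw [Matrix.IsHermitian, Matrix.fromBlocks_conjTranspose]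
  simp

lemma dil_add (A B : Matrix n n ℂ) : dil (A + B) = dil A + dil B := by
  unfold dil
  rw [Matrix.fromBlocks_add]
  simp

lemma schSum_dil (q : ℝ) (A : Matrix n n ℂ) : schSum q (dil A) = 2 * schSum q A := by
  rw [schSum_eq, schSum_eq, dil_herm]
  unfold dil rootSum
  rw [Matrix.fromBlocks_multiply]
  simp only [Matrix.zero_mul, Matrix.mul_zero, zero_add, add_zero]
  rw [Matrix.charpoly_fromBlocks_zero₁₂, Matrix.charpoly_mul_comm A,
    Polynomial.roots_mul, Multiset.map_add, Multiset.sum_add]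
  · ring
  · exact mul_ne_zero (Matrix.charpoly_monic _).ne_zero (Matrix.charpoly_monic _).ne_zero

lemma schattenNorm_sq (q : ℝ) (A : Matrix n n ℂ) :
    schattenNorm q A ^ 2 = schSum q A ^ (2 / q) := by
  change (schSum q A ^ (1 / q)) ^ 2 = _
  rw [← Real.rpow_natCast, ← Real.rpow_mul (schSum_nonneg q A)]
  congr 1
  push_cast
  ring

lemma schattenNorm_nonneg (q : ℝ) (A : Matrix n n ℂ) : 0 ≤ schattenNorm q A :=
  Real.rpow_nonneg (schSum_nonneg q A) _

theorem smooth_general {ι : Type*} [Fintype ι] {A Y : Matrix n n ℂ} {q d : ℝ} (hq : 2 ≤ q)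
    (E : ι → Matrix n n ℂ) (hd : d ≠ 0)
    (hc : ∀ i, A * E i = E i * A) (hc' : ∀ i, A.conjTranspose * E i = E i * A.conjTranspose)
    (hY : ∑ i, (E i).conjTranspose * Y * E i = 0)
    (hE : ∑ i, E i * (E i).conjTranspose = (d : ℂ) • 1) :
    schattenNorm q (A + Y) ^ 2 ≤ schattenNorm q A ^ 2 + (q - 1) * schattenNorm q Y ^ 2 := by
  have horth : (fcal (dil_herm A) (hpow q) * dil Y).trace = 0 := by
    set Z := fcal (dil_herm A) (hpow q) with hZ
    let F : ι → Matrix (n ⊕ n) (n ⊕ n) ℂ := fun i => Matrix.fromBlocks (E i) 0 0 (E i)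
    have hF : ∀ i, Z * F i = F i * Z := by
      intro i
      apply fcal_commute
      simp only [F, dil, Matrix.fromBlocks_multiply, Matrix.zero_mul, Matrix.mul_zero, zero_add,
        add_zero, hc, hc']
    have hYs : ∑ i, (E i).conjTranspose * Y.conjTranspose * E i = 0 := by
      have := congrArg Matrix.conjTranspose hY
      rw [Matrix.conjTranspose_sum, Matrix.conjTranspose_zero] at this
      rw [← this]
      refine Finset.sum_congr rfl fun i _ => ?_
      simp only [Matrix.conjTranspose_mul, Matrix.conjTranspose_conjTranspose, Matrix.mul_assoc]
    have sumB : ∀ P R S T : ι → Matrix n n ℂ, ∑ i, Matrix.fromBlocks (P i) (R i) (S i) (T i)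
        = Matrix.fromBlocks (∑ i, P i) (∑ i, R i) (∑ i, S i) (∑ i, T i) := by
      intro P R S T
      ext i j
      rw [Matrix.sum_apply]
      rcases i with i | i <;> rcases j with j | j <;>
        simp [Matrix.sum_apply]
    have h1 : ∑ i, (F i).conjTranspose * dil Y * F i = 0 := by
      simp only [F, dil, Matrix.fromBlocks_conjTranspose, Matrix.fromBlocks_multiply,
        Matrix.zero_mul, Matrix.mul_zero, zero_add, add_zero, Matrix.conjTranspose_zero]
      rw [sumB, hY, hYs]
      simp
    have h2 : ∑ i, F i * (F i).conjTranspose = (d : ℂ) • 1 := by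
      simp only [F, Matrix.fromBlocks_conjTranspose, Matrix.fromBlocks_multiply,
        Matrix.zero_mul, Matrix.mul_zero, zero_add, add_zero, Matrix.conjTranspose_zero]
      rw [sumB, hE, ← Matrix.fromBlocks_one, Matrix.fromBlocks_smul]
      simp
    have h3 : (Z * ∑ i, (F i).conjTranspose * dil Y * F i).trace = d * (Z * dil Y).trace := by
      calc _ = ∑ i, (Z * ((F i).conjTranspose * dil Y * F i)).trace := by
            rw [Finset.mul_sum, Matrix.trace_sum]
        _ = ∑ i, (Z * (F i * (F i).conjTranspose) * dil Y).trace := by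
            refine Finset.sum_congr rfl fun i _ => ?_
            rw [← Matrix.mul_assoc, Matrix.trace_mul_comm, ← Matrix.mul_assoc, ← Matrix.mul_assoc,
              ← hF]
            simp only [Matrix.mul_assoc]
        _ = (Z * (∑ i, F i * (F i).conjTranspose) * dil Y).trace := by
            rw [Finset.mul_sum, Finset.sum_mul, Matrix.trace_sum]
        _ = _ := by
            rw [h2]; simp
    rw [h1, Matrix.mul_zero, Matrix.trace_zero] at h3
    have hd' : (d : ℂ) ≠ 0 := by exact_mod_cast hd
    exact (mul_eq_zero.1 h3.symm).resolve_left hd'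
  have key := herm_smooth (dil_herm A) (dil_herm Y) (dil_herm (A + Y)) (dil_add A Y) hq horth
  simp only [trq_eq_schSum, schSum_dil] at key
  rw [schattenNorm_sq q, schattenNorm_sq q, schattenNorm_sq q]
  rw [Real.mul_rpow (by norm_num) (schSum_nonneg _ _),
    Real.mul_rpow (by norm_num) (schSum_nonneg _ _),
    Real.mul_rpow (by norm_num) (schSum_nonneg _ _)] at key
  have h2 : (0 : ℝ) < 2 ^ (2 / q) := by positivity
  have : (2 : ℝ) ^ (2 / q) * schSum q (A + Y) ^ (2 / q) ≤
      (2 : ℝ) ^ (2 / q) * (schSum q A ^ (2 / q) + (q - 1) * schSum q Y ^ (2 / q)) := by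
    linarith
  exact le_of_mul_le_mul_left this h2

lemma eig_le_opNorm (A : Matrix n n ℂ) (i : n) :
    (Matrix.isHermitian_conjTranspose_mul_self A).eigenvalues i ≤ opNorm A ^ 2 := by
  set hB := Matrix.isHermitian_conjTranspose_mul_self A
  set v := hB.eigenvectorBasis i with hv
  set L := Matrix.toEuclideanCLM (n := n) (𝕜 := ℂ) A with hL
  have hvn : ‖v‖ = 1 := hB.eigenvectorBasis.orthonormal.1 i
  have h1 : Matrix.toEuclideanCLM (n := n) (𝕜 := ℂ) (A.conjTranspose * A) v
      = (hB.eigenvalues i : ℂ) • v := by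
    have := hB.mulVec_eigenvectorBasis i
    ext j
    have := congrFun this j
    simpa using this
  have h2 : Matrix.toEuclideanCLM (n := n) (𝕜 := ℂ) (A.conjTranspose * A)
      = (ContinuousLinearMap.adjoint L) * L := by
    rw [map_mul, ← Matrix.star_eq_conjTranspose, map_star, ContinuousLinearMap.star_eq_adjoint]
  have h3 : inner ℂ v ((hB.eigenvalues i : ℂ) • v) = ((‖L v‖ ^ 2 : ℝ) : ℂ) := by
    rw [← h1, h2, mul_apply_eq_comp, ContinuousLinearMap.adjoint_inner_right,
      inner_self_eq_norm_sq_to_K]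
    norm_cast
  rw [inner_smul_right, inner_self_eq_norm_sq_to_K, hvn] at h3
  have h4 : hB.eigenvalues i = ‖L v‖ ^ 2 := by
    have : ((hB.eigenvalues i : ℝ) : ℂ) = ((‖L v‖ ^ 2 : ℝ) : ℂ) := by simpa using h3
    exact_mod_cast this
  rw [h4]
  have h5 : ‖L v‖ ≤ opNorm A := by
    have := L.le_opNorm v
    rw [hvn, mul_one] at this
    exact this
  exact pow_le_pow_left₀ (norm_nonneg _) h5 2

lemma schSum_one (q : ℝ) : schSum q (1 : Matrix n n ℂ) = Fintype.card n := by
  rw [schSum_eq, Matrix.conjTranspose_one, Matrix.one_mul]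
  unfold rootSum
  rw [← Matrix.diagonal_one, Matrix.charpoly_diagonal, roots_prod_linear,
    Multiset.map_map]
  simp

lemma opNorm_nonneg (A : Matrix n n ℂ) : 0 ≤ opNorm A := norm_nonneg _

lemma schattenNorm_le {q : ℝ} (hq : 2 ≤ q) (A : Matrix n n ℂ) :
    schattenNorm q A ≤ schattenNorm q (1 : Matrix n n ℂ) * opNorm A := by
  change schSum q A ^ (1 / q) ≤ schSum q 1 ^ (1 / q) * opNorm A
  have h : schSum q A ≤ schSum q (1 : Matrix n n ℂ) * opNorm A ^ q := by
    rw [schSum_one]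
    unfold schSum
    calc _ ≤ ∑ i : n, opNorm A ^ q := by
          refine Finset.sum_le_sum fun i _ => ?_
          have := Real.rpow_le_rpow
            (eig_nonneg A i)
            (eig_le_opNorm A i) (show 0 ≤ q / 2 by linarith)
          rwa [sq_rpow_half, abs_of_nonneg (opNorm_nonneg A)] at this
      _ = _ := by simp
  refine (Real.rpow_le_rpow (schSum_nonneg _ _) h (by positivity)).trans (le_of_eq ?_)
  rw [Real.mul_rpow (schSum_nonneg _ _) (Real.rpow_nonneg (opNorm_nonneg A) _),
    ← Real.rpow_mul (opNorm_nonneg A), mul_one_div_cancel (by linarith : q ≠ 0), Real.rpow_one]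

end schatten

/-! ### Local structure -/

section localsec
variable {m : ℕ} (Q : Fin m → Type*) [∀ x, Fintype (Q x)] [∀ x, DecidableEq (Q x)]

/-- Matrix unit at site `x`. -/
def siteUnit (x : Fin m) (ab : Q x × Q x) : Matrix (∀ y, Q y) (∀ y, Q y) ℂ :=
  fun f g => if g x = ab.2 ∧ f = Function.update g x ab.1 then 1 else 0

variable {Q}

lemma unit_cond (x : Fin m) (a b : Q x) (f g : ∀ y, Q y) :
    (g x = b ∧ f = Function.update g x a) ↔ (f x = a ∧ g = Function.update f x b) := by
  constructor
  · rintro ⟨rfl, rfl⟩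
    simp
  · rintro ⟨rfl, rfl⟩
    simp

lemma mul_siteUnit (x : Fin m) (a b : Q x) (A : Matrix (∀ y, Q y) (∀ y, Q y) ℂ) (f g : ∀ y, Q y) :
    (A * siteUnit Q x (a, b)) f g = if g x = b then A f (Function.update g x a) else 0 := by
  rw [Matrix.mul_apply]
  unfold siteUnit
  split_ifs with h
  · simp [h]
  · simp [h]

lemma siteUnit_mul (x : Fin m) (a b : Q x) (A : Matrix (∀ y, Q y) (∀ y, Q y) ℂ) (f g : ∀ y, Q y) :
    (siteUnit Q x (a, b) * A) f g = if f x = a then A (Function.update f x b) g else 0 := by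
  rw [Matrix.mul_apply]
  unfold siteUnit
  have hk : ∀ k : ∀ y, Q y, (k x = b ∧ f = Function.update k x a) ↔
      (f x = a ∧ k = Function.update f x b) := fun k => by
    constructor
    · rintro ⟨rfl, rfl⟩
      simp
    · rintro ⟨rfl, rfl⟩
      simp
  dsimp only
  simp only [hk]
  split_ifs with h
  · simp [h]
  · simp [h]

lemma siteUnit_conjTranspose (x : Fin m) (a b : Q x) :
    (siteUnit Q x (a, b)).conjTranspose = siteUnit Q x (b, a) := by
  ext f g
  rw [Matrix.conjTranspose_apply]
  unfold siteUnit
  simp only [unit_cond x b a]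
  split_ifs <;> simp

lemma supported_apply {S : Finset (Fin m)} {A : Matrix (∀ y, Q y) (∀ y, Q y) ℂ}
    (h : SupportedOn Q S A) : ∃ B : Matrix (∀ x : {y : Fin m // y ∈ S}, Q x)
      (∀ x : {y : Fin m // y ∈ S}, Q x) ℂ, ∀ f g, A f g =
      B (fun i => f i) (fun i => g i) * (if ∀ i, i ∉ S → f i = g i then 1 else 0) := by
  obtain ⟨B, rfl⟩ := h
  refine ⟨B, fun f g => ?_⟩
  simp only [Matrix.reindex_apply, Equiv.symm_symm, Matrix.submatrix_apply,
    Matrix.kroneckerMap_apply, Matrix.one_apply, Equiv.piEquivPiSubtypeProd_apply]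
  congr 1
  have : ((fun x : {y : Fin m // ¬ y ∈ S} => f x) = fun x : {y : Fin m // ¬ y ∈ S} => g x) ↔
      ∀ i, i ∉ S → f i = g i := by
    rw [funext_iff, Subtype.forall]
  simp only [this]

lemma supported_commute {S : Finset (Fin m)} {A : Matrix (∀ y, Q y) (∀ y, Q y) ℂ}
    (h : SupportedOn Q S A) {x : Fin m} (hx : x ∉ S) (ab : Q x × Q x) :
    A * siteUnit Q x ab = siteUnit Q x ab * A := by
  obtain ⟨a, b⟩ := ab
  obtain ⟨B, hB⟩ := supported_apply h
  ext f g
  rw [mul_siteUnit, siteUnit_mul, hB, hB]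
  have e1 : ∀ (f : ∀ y, Q y) (v : Q x), (fun i : {y : Fin m // y ∈ S} => Function.update f x v i)
      = fun i : {y : Fin m // y ∈ S} => f i := by
    intro f v
    ext i
    rw [Function.update_of_ne]
    rintro rfl
    exact hx i.2
  rw [e1, e1]
  have c1 : (∀ i, i ∉ S → f i = Function.update g x a i) ↔
      (f x = a ∧ ∀ i, i ∉ S → i ≠ x → f i = g i) := by
    constructor
    · intro h
      refine ⟨by simpa using h x hx, fun i hi hne => ?_⟩
      simpa [hne] using h i hi
    · rintro ⟨h1, h2⟩ i hi
      by_cases hne : i = x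
      · subst hne; simpa using h1
      · simpa [hne] using h2 i hi hne
  have c2 : (∀ i, i ∉ S → Function.update f x b i = g i) ↔
      (g x = b ∧ ∀ i, i ∉ S → i ≠ x → f i = g i) := by
    constructor
    · intro h
      refine ⟨by simpa using (h x hx).symm, fun i hi hne => ?_⟩
      simpa [hne] using h i hi
    · rintro ⟨h1, h2⟩ i hi
      by_cases hne : i = x
      · subst hne; simpa using h1.symm
      · simpa [hne] using h2 i hi hne
  simp only [c1, c2]
  by_cases p1 : f x = a <;> by_cases p2 : g x = b <;> simp [p1, p2]

lemma traceless_sum {x : Fin m} {Y : Matrix (∀ y, Q y) (∀ y, Q y) ℂ} (h : TracelessAt Q x Y) :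
    ∑ ab : Q x × Q x, (siteUnit Q x ab).conjTranspose * Y * siteUnit Q x ab = 0 := by
  ext f g
  rw [Matrix.sum_apply, Matrix.zero_apply, Fintype.sum_prod_type]
  simp only [siteUnit_conjTranspose, mul_siteUnit, siteUnit_mul]
  rw [Finset.sum_comm]
  apply Finset.sum_eq_zero
  intro b _
  by_cases p1 : f x = b <;> by_cases p2 : g x = b <;> simp [p1, p2, h f g]

lemma siteUnit_complete (x : Fin m) :
    ∑ ab : Q x × Q x, siteUnit Q x ab * (siteUnit Q x ab).conjTranspose
      = ((Fintype.card (Q x) : ℝ) : ℂ) • 1 := by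
  ext f g
  rw [Matrix.sum_apply, Fintype.sum_prod_type]
  simp only [siteUnit_conjTranspose, siteUnit_mul]
  have : ∀ a b : Q x, (if f x = a then siteUnit Q x (b, a) (Function.update f x b) g else 0)
      = if f x = a then (if f = g then 1 else 0) else 0 := by
    intro a b
    by_cases h : f x = a
    · simp only [h, if_true]
      unfold siteUnit
      congr 1
      apply propext
      simp only
      rw [unit_cond]
      simp only [Function.update_self, Function.update_idem, true_and]
      rw [← h, Function.update_eq_self]
      exact eq_comm
    · simp [h]
  simp only [this]
  rw [Finset.sum_comm]
  simp [Matrix.one_apply]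

lemma siteUnit_commute_star {x : Fin m} {A : Matrix (∀ y, Q y) (∀ y, Q y) ℂ}
    (h : ∀ ab : Q x × Q x, A * siteUnit Q x ab = siteUnit Q x ab * A) (ab : Q x × Q x) :
    A.conjTranspose * siteUnit Q x ab = siteUnit Q x ab * A.conjTranspose := by
  obtain ⟨a, b⟩ := ab
  have := congrArg Matrix.conjTranspose (h (b, a))
  rw [Matrix.conjTranspose_mul, Matrix.conjTranspose_mul, siteUnit_conjTranspose] at this
  exact this.symm

lemma site_smooth [∀ x, Nonempty (Q x)] {x : Fin m} {A Y : Matrix (∀ y, Q y) (∀ y, Q y) ℂ} {q : ℝ}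
    (hq : 2 ≤ q) (hA : ∀ ab : Q x × Q x, A * siteUnit Q x ab = siteUnit Q x ab * A)
    (hY : TracelessAt Q x Y) :
    schattenNorm q (A + Y) ^ 2 ≤ schattenNorm q A ^ 2 + (q - 1) * schattenNorm q Y ^ 2 :=
  smooth_general hq (siteUnit Q x) (d := Fintype.card (Q x))
    (by exact_mod_cast Fintype.card_ne_zero) hA (siteUnit_commute_star hA)
    (traceless_sum hY) (siteUnit_complete x)

lemma multi_smooth [∀ x, Nonempty (Q x)] {q : ℝ} (hq : 2 ≤ q)
    (F : Finset (Fin m) → Matrix (∀ x, Q x) (∀ x, Q x) ℂ) (T : Finset (Fin m)) :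
    ∀ (𝒮 : Finset (Finset (Fin m))) (R : Finset (Fin m)),
    (∀ S ∈ 𝒮, SupportedOn Q S (F S)) →
    (∀ S ∈ 𝒮, ∀ x ∈ S, TracelessAt Q x (F S)) →
    (∀ S ∈ 𝒮, S \ T = R) →
    schattenNorm q (∑ S ∈ 𝒮, F S) ^ 2 ≤
      ∑ S ∈ 𝒮, (q - 1) ^ (S ∩ T).card * schattenNorm q (F S) ^ 2 := by
  induction T using Finset.induction_on with
  | empty =>
    intro 𝒮 R _ _ hR
    have hsub : 𝒮 ⊆ {R} := by
      intro S hS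
      rw [Finset.mem_singleton]
      simpa using hR S hS
    rcases Finset.subset_singleton_iff.1 hsub with rfl | rfl
    · simp only [Finset.sum_empty]
      have : schattenNorm q (0 : Matrix (∀ x, Q x) (∀ x, Q x) ℂ) ≤ _ := schattenNorm_le hq _
      have h0 : opNorm (0 : Matrix (∀ x, Q x) (∀ x, Q x) ℂ) = 0 := by simp [opNorm]
      rw [h0, mul_zero] at this
      have := le_antisymm this (schattenNorm_nonneg q _)
      rw [this]; simp
    · simp
  | insert x T hx ih =>
    intro 𝒮 R h1 h2 hR
    have ihA := ih (𝒮.filter (fun S => x ∉ S)) R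
      (fun S hS => h1 S (Finset.mem_filter.1 hS).1)
      (fun S hS => h2 S (Finset.mem_filter.1 hS).1)
      (by
        intro S hS
        obtain ⟨hS, hxS⟩ := Finset.mem_filter.1 hS
        rw [← hR S hS]
        ext y
        simp only [Finset.mem_sdiff, Finset.mem_insert]
        grind)
    have ihY := ih (𝒮.filter (fun S => ¬ x ∉ S)) (insert x R)
      (fun S hS => h1 S (Finset.mem_filter.1 hS).1)
      (fun S hS => h2 S (Finset.mem_filter.1 hS).1)
      (by
        intro S hS
        obtain ⟨hS, hxS⟩ := Finset.mem_filter.1 hS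
        rw [← hR S hS]
        ext y
        simp only [Finset.mem_sdiff, Finset.mem_insert]
        grind)
    rw [← Finset.sum_filter_add_sum_filter_not 𝒮 (fun S => x ∉ S) F,
      ← Finset.sum_filter_add_sum_filter_not 𝒮 (fun S => x ∉ S)
        (fun S => (q - 1) ^ (S ∩ insert x T).card * schattenNorm q (F S) ^ 2)]
    have key := site_smooth (x := x) (A := ∑ S ∈ 𝒮.filter (fun S => x ∉ S), F S)
      (Y := ∑ S ∈ 𝒮.filter (fun S => ¬ x ∉ S), F S) hq
      (by
        intro ab
        rw [Finset.sum_mul, Finset.mul_sum]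
        refine Finset.sum_congr rfl fun S hS => ?_
        obtain ⟨hS, hxS⟩ := Finset.mem_filter.1 hS
        exact supported_commute (h1 S hS) hxS ab)
      (by
        intro f g
        simp_rw [Matrix.sum_apply]
        rw [Finset.sum_comm]
        apply Finset.sum_eq_zero
        intro S hS
        obtain ⟨hS, hxS⟩ := Finset.mem_filter.1 hS
        exact h2 S hS x (not_not.1 hxS) f g)
    refine key.trans (add_le_add (ihA.trans (le_of_eq ?_)) ?_)
    · refine Finset.sum_congr rfl fun S hS => ?_
      rw [Finset.inter_insert_of_notMem (Finset.mem_filter.1 hS).2]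
    · refine (mul_le_mul_of_nonneg_left ihY (by linarith)).trans (le_of_eq ?_)
      rw [Finset.mul_sum]
      refine Finset.sum_congr rfl fun S hS => ?_
      rw [Finset.inter_insert_of_mem (not_not.1 (Finset.mem_filter.1 hS).2),
        Finset.card_insert_of_notMem (by simp [hx])]
      ring

end localsec

/-- For a `k`-local Hamiltonian `H = ∑_{i₁<⋯<i_k} H_{i₁⋯i_k}` (sum over `k`-element subsets,
each term supported on its subset and traceless on each of its qudits), and any `q ≥ 2`,
`‖H‖_q ≤ (q−1)^{k/2} · ‖I‖_q · ‖H‖_(2)` with `‖H‖_(2) = √(∑ ‖H_{i₁⋯i_k}‖_∞²)`. -/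
theorem klocal_schatten_bound
    {m : ℕ} (Q : Fin m → Type*) [∀ x, Fintype (Q x)] [∀ x, DecidableEq (Q x)]
    (k : ℕ)
    (Hterm : Finset (Fin m) → Matrix (∀ x, Q x) (∀ x, Q x) ℂ)
    (hsupp : ∀ S ∈ Finset.univ.powersetCard k, SupportedOn Q S (Hterm S))
    (htr : ∀ S ∈ Finset.univ.powersetCard k, ∀ x ∈ S, TracelessAt Q x (Hterm S))
    (H : Matrix (∀ x, Q x) (∀ x, Q x) ℂ)
    (hH : H = ∑ S ∈ Finset.univ.powersetCard k, Hterm S)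
    (q : ℝ) (hq : 2 ≤ q) :
    schattenNorm q H ≤
      (q - 1) ^ ((k : ℝ) / 2) * schattenNorm q (1 : Matrix (∀ x, Q x) (∀ x, Q x) ℂ) *
        Real.sqrt (∑ S ∈ Finset.univ.powersetCard k, opNorm (Hterm S) ^ 2) := by
  have hR : 0 ≤ (q - 1) ^ ((k : ℝ) / 2) *
      schattenNorm q (1 : Matrix (∀ x, Q x) (∀ x, Q x) ℂ) *
        Real.sqrt (∑ S ∈ Finset.univ.powersetCard k, opNorm (Hterm S) ^ 2) :=
    mul_nonneg (mul_nonneg (Real.rpow_nonneg (by linarith) _) (schattenNorm_nonneg _ _))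
      (Real.sqrt_nonneg _)
  by_cases hne : ∀ x, Nonempty (Q x)
  · refine (pow_le_pow_iff_left₀ (schattenNorm_nonneg _ _) hR two_ne_zero).1 ?_
    have key := multi_smooth hq Hterm Finset.univ (Finset.univ.powersetCard k) ∅ hsupp htr
      (fun S _ => by simp)
    rw [← hH] at key
    refine key.trans ?_
    have e : ((q - 1) ^ ((k : ℝ) / 2) * schattenNorm q (1 : Matrix (∀ x, Q x) (∀ x, Q x) ℂ) *
        Real.sqrt (∑ S ∈ Finset.univ.powersetCard k, opNorm (Hterm S) ^ 2)) ^ 2 =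
        ∑ S ∈ Finset.univ.powersetCard k, (q - 1) ^ k *
          (schattenNorm q (1 : Matrix (∀ x, Q x) (∀ x, Q x) ℂ) * opNorm (Hterm S)) ^ 2 := by
      rw [mul_pow, mul_pow, Real.sq_sqrt (Finset.sum_nonneg fun S _ => sq_nonneg _)]
      have : ((q - 1) ^ ((k : ℝ) / 2)) ^ 2 = (q - 1) ^ k := by
        rw [← Real.rpow_natCast, ← Real.rpow_mul (by linarith), ← Real.rpow_natCast]
        congr 1; push_cast; ring
      rw [this, Finset.mul_sum]
      refine Finset.sum_congr rfl fun S _ => by ring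
    rw [e]
    refine Finset.sum_le_sum fun S hS => ?_
    rw [Finset.inter_univ, (Finset.mem_powersetCard.1 hS).2]
    apply mul_le_mul_of_nonneg_left _ (pow_nonneg (by linarith) _)
    exact pow_le_pow_left₀ (schattenNorm_nonneg _ _) (schattenNorm_le hq _) 2
  · push Not at hne
    obtain ⟨x, hx⟩ := hne
    haveI : IsEmpty (∀ x, Q x) := ⟨fun f => hx.false (f x)⟩
    refine le_trans (le_of_eq ?_) hR
    unfold schattenNorm
    rw [Finset.univ_eq_empty, Finset.sum_empty, Real.zero_rpow]
    exact one_div_ne_zero (by linarith)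
end
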